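/- arXiv:1804.02194 — 3 statements merged into one kernel-verified Lean document; each statement's English description precedes it below -/
import Mathlib

section
/- Let X be a Banach sequence space over a countably infinite index set I in which the canonical unit vectors (e_i)_{i∈I} form an OP-basis, let φ : I → I be an injective map, and for each 1 ≤ l ≤ N (N ≥ 2) let T_l = T_{b^{(l)},φ} : X → X be a weighted pseudo-shift generated by φ with weight sequence b^{(l)} = (b_i^{(l)})_{i∈I} of nonzero scalars. Then for any integers 1 ≤ r₁ < r₂ < ⋯ < r_N the following are equivalent: (1) T₁^{r₁}, T₂^{r₂}, …, T_N^{r_N} have a dense set of d-supercyclic vectors; (2) (α) the mapping φ has no periodic points, and (β) there exists a strictly increasing sequence (n_k)_{k≥1} of positive integers such that: (H1) for all i, j ∈ I and all 1 ≤ l, s ≤ N, ‖(∏_{v=0}^{r_l n_k−1} b^{(l)}_{φ^v(i)})^{−1} e_{φ^{r_l n_k}(i)}‖ · ‖(∏_{v=1}^{r_s n_k} b^{(s)}_{ψ^v(j)}) e_{ψ^{r_s n_k}(j)}‖ → 0 as k → ∞; and (H2) for every i ∈ I and all 1 ≤ s < l ≤ N, ‖(∏_{v=0}^{r_s n_k−1}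 b^{(s)}_{φ^v(i)})^{−1} (∏_{v=1}^{r_l n_k} b^{(l)}_{ψ^v(φ^{r_s n_k}(i))}) e_{ψ^{(r_l−r_s) n_k}(i)}‖ → 0 and ‖(∏_{v=0}^{r_l n_k−1} b^{(l)}_{φ^v(i)})^{−1} (∏_{v=1}^{r_s n_k} b^{(s)}_{ψ^v(φ^{r_l n_k}(i))}) e_{φ^{(r_l−r_s) n_k}(i)}‖ → 0 as k → ∞. -/
open Filter Topology
open scoped Classical

/-- The vector `(∏_{v=1}^{n} b_{ψ^v(i)}) • e_{ψ^n(i)}`, where `ψ` is the partial inverse of the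
injective map `φ`, with the convention that the whole term is `0` when `ψ^n(i)` is undefined
(i.e. when `i ∉ φ^n(I)`). -/
noncomputable def backVec {I X : Type*} [AddCommGroup X] [Module ℂ X]
    (φ : I → I) (b : I → ℂ) (e : I → X) (n : ℕ) (i : I) : X :=
  if h : ∃ j, φ^[n] j = i then
    (∏ v ∈ Finset.range n, b (φ^[v] (Classical.choose h))) • e (Classical.choose h)
  else 0

/-!
If `φ^M(i) = i`, the `i`-th coordinates of `T_l^{r_l n} x` satisfy `u_{n+M} = c_l u_n`, so for two
indices `l` the quotient of these coordinates, or its inverse, stays bounded, and the joint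
projective orbit is not dense. Otherwise let `x` be a d-supercyclic vector near `∑_{j ∈ F} e_j` such
that every `c T_l^{r_l n} x` is near `∑_{j ∈ F} e_j` too, with `n` so large that `φ^{r_l n}` moves
`F` off itself. Comparing coordinates on and off `F`, the forward vectors in (H1) have norm at most
`2η|c|` and the backward vectors at most `2η/|c|`: the unknown scalar `c` cancels in the product.
(H2) is similar. Such `n` are arbitrarily large because `X^N` is infinite-dimensional, and a
diagonal argument over finite sets `F` exhausting `I` yields `(n_k)`.

Conversely, let `R_k = (T_1^{r_1 n_k}, …, T_N^{r_N n_k})`. By (H2), combinations `w_k` of forward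
vectors satisfy `R_k w_k → y` for any prescribed finitely supported `y`, and (H1) gives
`‖w_k‖ ‖R_k x‖ → 0`. For a scalar `t` balancing the two factors, `x + t⁻¹ w_k` is near `x` while
`t R_k (x + t⁻¹ w_k)` is near `y`; Baire's theorem does the rest.
-/

section Supercyclicity

variable {𝕜 X Y : Type*} [NontriviallyNormedField 𝕜] [AddCommGroup X] [Module 𝕜 X]
  [TopologicalSpace X] [AddCommGroup Y] [Module 𝕜 Y] [TopologicalSpace Y]

/-- The supercyclic vectors of a sequence of operators `R n : X → Y`: those vectors whose
projective orbit is dense in `Y`. -/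
def supercyclicVectors (R : ℕ → X →L[𝕜] Y) : Set X :=
  {x | Dense (Set.range fun p : 𝕜 × ℕ => p.1 • R p.2 x)}

theorem supercyclicVectors_comp_subset (R : ℕ → X →L[𝕜] Y) (n : ℕ → ℕ) :
    supercyclicVectors (fun k => R (n k)) ⊆ supercyclicVectors R := by
  intro x (hx : Dense _)
  exact hx.mono (Set.range_subset_iff.2 fun p : 𝕜 × ℕ => ⟨(p.1, n p.2), rfl⟩)

theorem frequently_exists_smul_mem [CompleteSpace 𝕜] [IsTopologicalAddGroup Y]
    [ContinuousSMul 𝕜 Y] [T2Space Y] (hY : ¬ FiniteDimensional 𝕜 Y) {R : ℕ → X →L[𝕜] Y} {x : X}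
    (hx : x ∈ supercyclicVectors R) {y : Y} {V : Set Y} (hV : V ∈ 𝓝 y) :
    ∃ᶠ n in atTop, ∃ c : 𝕜, c • R n x ∈ V := by
  refine frequently_atTop.2 fun m => ?_
  -- A finite segment of the projective orbit spans a closed subspace with empty interior.
  let L : Submodule 𝕜 Y := Submodule.span 𝕜 ((fun n => R n x) '' Set.Iio m)
  have hLfin : FiniteDimensional 𝕜 L :=
    FiniteDimensional.span_of_finite 𝕜 ((Set.finite_Iio m).image _)
  have hLcompl : Dense (L : Set Y)ᶜ := by
    rw [← interior_eq_empty_iff_dense_compl, ← Set.not_nonempty_iff_eq_empty]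
    intro hL
    rw [L.eq_top_of_nonempty_interior' hL] at hLfin
    exact hY (Module.Finite.equiv Submodule.topEquiv)
  obtain ⟨z, hzV, hzL⟩ := hLcompl.inter_open_nonempty _ isOpen_interior
    ⟨y, mem_interior_iff_mem_nhds.2 hV⟩
  obtain ⟨_, ⟨hcV, hcL⟩, ⟨c, n⟩, rfl⟩ := hx.inter_open_nonempty _
    (isOpen_interior.inter L.closed_of_finiteDimensional.isOpen_compl) ⟨z, hzV, hzL⟩
  refine ⟨n, le_of_not_gt fun hnm => hcL ?_, c, interior_subset hcV⟩
  exact L.smul_mem c (Submodule.subset_span (Set.mem_image_of_mem _ hnm))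

theorem dense_supercyclicVectors_of_transitive [BaireSpace X] [SecondCountableTopology Y]
    [ContinuousConstSMul 𝕜 Y] {R : ℕ → X →L[𝕜] Y}
    (hR : ∀ (U : Set X) (V : Set Y), IsOpen U → U.Nonempty → IsOpen V → V.Nonempty →
      ∃ x ∈ U, ∃ (c : 𝕜) (n : ℕ), c • R n x ∈ V) :
    Dense (supercyclicVectors R) := by
  let B := TopologicalSpace.countableBasis Y
  have hB : TopologicalSpace.IsTopologicalBasis B := TopologicalSpace.isBasis_countableBasis Y
  let G : Set Y → Set X := fun V => ⋃ p : 𝕜 × ℕ, (fun x => p.1 • R p.2 x) ⁻¹' V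
  have hGopen : ∀ V ∈ B, IsOpen (G V) := fun V hV =>
    isOpen_iUnion fun p => (hB.isOpen hV).preimage ((R p.2).continuous.const_smul p.1)
  have hGdense : ∀ V ∈ B, Dense (G V) := fun V hV => dense_iff_inter_open.2 fun U hU hUne => by
    obtain ⟨x, hxU, c, n, hxV⟩ := hR U V hU hUne (hB.isOpen hV)
      (TopologicalSpace.nonempty_of_mem_countableBasis hV)
    exact ⟨x, hxU, Set.mem_iUnion.2 ⟨(c, n), hxV⟩⟩
  refine (dense_biInter_of_isOpen hGopen
    (TopologicalSpace.countable_countableBasis Y) hGdense).mono fun x hx => ?_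
  refine hB.dense_iff.2 fun V hV _ => ?_
  obtain ⟨p, hp⟩ := Set.mem_iUnion.1 (Set.mem_iInter₂.1 hx V hV)
  exact ⟨_, hp, p, rfl⟩

end Supercyclicity

section SupercyclicityCriterion

variable {𝕜 X Y : Type*} [NontriviallyNormedField 𝕜] [NormedAddCommGroup X] [NormedSpace 𝕜 X]
  [NormedAddCommGroup Y] [NormedSpace 𝕜 Y]

variable (𝕜) in
theorem exists_norm_smul_lt_and_norm_inv_smul_lt {ε : ℝ} (hε : 0 < ε) :
    ∃ δ > 0, ∀ (x : X) (y : Y), ‖x‖ * ‖y‖ < δ →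
      ∃ t : 𝕜, t ≠ 0 ∧ ‖t⁻¹ • x‖ < ε ∧ ‖t • y‖ < ε := by
  obtain ⟨q, hq⟩ := NormedField.exists_one_lt_norm 𝕜
  have : 0 < ‖q‖ := one_pos.trans hq
  refine ⟨ε ^ 2 / ‖q‖, by positivity, fun x y hxy => ?_⟩
  rcases eq_or_ne y 0 with rfl | hy
  · obtain ⟨t, ht⟩ := NormedField.exists_lt_norm 𝕜 (‖x‖ / ε)
    have ht0 : 0 < ‖t‖ := (by positivity : 0 ≤ ‖x‖ / ε).trans_lt ht
    refine ⟨t, norm_pos_iff.1 ht0, ?_, by simpa using hε⟩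
    rwa [norm_smul, norm_inv, inv_mul_lt_iff₀ ht0, ← div_lt_iff₀ hε]
  · obtain ⟨t, ht0, hty, -, htinv⟩ := rescale_to_shell hq hε hy
    refine ⟨t, ht0, ?_, hty⟩
    calc ‖t⁻¹ • x‖ = ‖t‖⁻¹ * ‖x‖ := by rw [norm_smul, norm_inv]
      _ ≤ ε⁻¹ * ‖q‖ * ‖y‖ * ‖x‖ := by gcongr
      _ = ε⁻¹ * ‖q‖ * (‖x‖ * ‖y‖) := by ring
      _ < ε⁻¹ * ‖q‖ * (ε ^ 2 / ‖q‖) := by gcongr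
      _ = ε := by field_simp

theorem exists_mem_smul_mem_of_tendsto {R : ℕ → X →L[𝕜] Y} {x : X} {y : Y} {w : ℕ → X}
    (hRw : Tendsto (fun n => R n (w n)) atTop (𝓝 y))
    (hw : Tendsto (fun n => ‖w n‖ * ‖R n x‖) atTop (𝓝 0))
    {U : Set X} (hU : U ∈ 𝓝 x) {V : Set Y} (hV : V ∈ 𝓝 y) :
    ∃ z ∈ U, ∃ (c : 𝕜) (n : ℕ), c • R n z ∈ V := by
  obtain ⟨ρ, hρ, hρU⟩ := Metric.mem_nhds_iff.1 hU
  obtain ⟨σ, hσ, hσV⟩ := Metric.mem_nhds_iff.1 hV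
  obtain ⟨δ, hδ, hscale⟩ := exists_norm_smul_lt_and_norm_inv_smul_lt (X := X) (Y := Y) 𝕜
    (lt_min hρ (half_pos hσ))
  obtain ⟨n, hwn, hRwn⟩ := ((hw.eventually_lt_const hδ).and
    (hRw.eventually (Metric.ball_mem_nhds y (half_pos hσ)))).exists
  obtain ⟨t, ht0, htw, htx⟩ := hscale (w n) (R n x) hwn
  refine ⟨x + t⁻¹ • w n, hρU ?_, t, n, hσV ?_⟩
  · rw [mem_ball_iff_norm, add_sub_cancel_left]
    exact htw.trans_le (min_le_left _ _)
  · have hz : t • R n (x + t⁻¹ • w n) - y = t • R n x + (R n (w n) - y) := by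
      rw [map_add, map_smul, smul_add, smul_inv_smul₀ ht0, add_sub_assoc]
    rw [mem_ball_iff_norm, hz]
    calc ‖t • R n x + (R n (w n) - y)‖ ≤ ‖t • R n x‖ + ‖R n (w n) - y‖ := norm_add_le _ _
      _ < σ / 2 + σ / 2 :=
        add_lt_add (htx.trans_le (min_le_right _ _)) (mem_ball_iff_norm.1 hRwn)
      _ = σ := add_halves σ

theorem tendsto_norm_linearCombination_mul_norm_linearCombination {α β γ : Type*} {l : Filter γ}
    {u : α → γ → X} {v : β → γ → Y}
    (huv : ∀ i j, Tendsto (fun k => ‖u i k‖ * ‖v j k‖) l (𝓝 0)) (a : α →₀ 𝕜) (d : β →₀ 𝕜) :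
    Tendsto (fun k => ‖Finsupp.linearCombination 𝕜 (u · k) a‖ *
      ‖Finsupp.linearCombination 𝕜 (v · k) d‖) l (𝓝 0) := by
  have hsum : Tendsto (fun k => ∑ i ∈ a.support, ∑ j ∈ d.support,
      ‖a i‖ * ‖d j‖ * (‖u i k‖ * ‖v j k‖)) l (𝓝 0) := by
    simpa using tendsto_finsetSum a.support fun i _ => tendsto_finsetSum d.support fun j _ =>
      (huv i j).const_mul (‖a i‖ * ‖d j‖)
  refine squeeze_zero (fun k => by positivity) (fun k => ?_) hsum
  calc ‖Finsupp.linearCombination 𝕜 (u · k) a‖ * ‖Finsupp.linearCombination 𝕜 (v · k) d‖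
      ≤ (∑ i ∈ a.support, ‖a i • u i k‖) * ∑ j ∈ d.support, ‖d j • v j k‖ := by
        gcongr <;> exact norm_sum_le _ _
    _ = ∑ i ∈ a.support, ∑ j ∈ d.support, ‖a i‖ * ‖d j‖ * (‖u i k‖ * ‖v j k‖) := by
        simp only [Finset.sum_mul_sum, norm_smul, mul_mul_mul_comm]

theorem dense_supercyclicVectors_of_tendsto [CompleteSpace X] [SecondCountableTopology Y]
    {α β : Type*} {e : α → X} (he : Dense (Submodule.span 𝕜 (Set.range e) : Set X))
    {g : β → Y} (hg : Dense (Submodule.span 𝕜 (Set.range g) : Set Y))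
    {R : ℕ → X →L[𝕜] Y} {u : β → ℕ → X}
    (hRu : ∀ j, Tendsto (fun n => R n (u j n)) atTop (𝓝 (g j)))
    (hu : ∀ j i, Tendsto (fun n => ‖u j n‖ * ‖R n (e i)‖) atTop (𝓝 0)) :
    Dense (supercyclicVectors R) := by
  refine dense_supercyclicVectors_of_transitive fun U V hU hUne hV hVne => ?_
  obtain ⟨x, hxU, hx⟩ := he.inter_open_nonempty U hU hUne
  obtain ⟨y, hyV, hy⟩ := hg.inter_open_nonempty V hV hVne
  obtain ⟨d, rfl⟩ := Finsupp.mem_span_range_iff_exists_finsupp.1 hx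
  obtain ⟨a, rfl⟩ := Finsupp.mem_span_range_iff_exists_finsupp.1 hy
  refine exists_mem_smul_mem_of_tendsto (w := fun n => Finsupp.linearCombination 𝕜 (u · n) a)
    ?_ ?_ (hU.mem_nhds hxU) (hV.mem_nhds hyV)
  · simp only [Finsupp.linearCombination_apply, Finsupp.sum, map_sum, map_smul]
    exact tendsto_finsetSum _ fun j _ => (hRu j).const_smul (a j)
  · simpa only [Finsupp.linearCombination_apply, map_finsuppSum, map_smul] using
      tendsto_norm_linearCombination_mul_norm_linearCombination hu a d

theorem dense_span_range_single {ι α : Type*} [Finite ι] [DecidableEq ι] {e : α → X}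
    (he : Dense (Submodule.span 𝕜 (Set.range e) : Set X)) :
    Dense (Submodule.span 𝕜 (Set.range fun p : ι × α => (Pi.single p.1 (e p.2) : ι → X)) :
      Set (ι → X)) := by
  have hspan : Submodule.span 𝕜 (Set.range fun p : ι × α => (Pi.single p.1 (e p.2) : ι → X)) =
      Submodule.pi Set.univ fun _ => Submodule.span 𝕜 (Set.range e) := by
    rw [← Submodule.iSup_map_single]
    simp only [Submodule.map_span, ← Submodule.span_iUnion, ← Set.range_comp]
    congr 1
    ext y
    simp [eq_comm]
  rw [hspan, Submodule.coe_pi]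
  exact dense_pi _ fun _ _ => he

end SupercyclicityCriterion

section Iterates

variable {I : Type*} {φ : I → I}

theorem eventually_iterate_notMem (hφ : Function.Injective φ)
    (hp : ∀ i : I, ∀ M : ℕ, 1 ≤ M → φ^[M] i ≠ i) (F : Finset I) (i : I) :
    ∀ᶠ m in atTop, φ^[m] i ∉ F := by
  have horbit : Function.Injective fun m => φ^[m] i :=
    Function.Injective.of_lt_imp_ne fun m n hmn h =>
      hp i (n - m) (Nat.sub_pos_of_lt hmn) (Function.iterate_cancel hφ h.symm)
  rw [← Nat.cofinite_eq_atTop]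
  exact horbit.tendsto_cofinite.eventually F.finite_toSet.eventually_cofinite_notMem

theorem eventually_iterate_mul_ne_of_lt (hφ : Function.Injective φ)
    (hp : ∀ i : I, ∀ M : ℕ, 1 ≤ M → φ^[M] i ≠ i) (F : Finset I) {p q : ℕ} (hpq : p < q) :
    ∀ᶠ n in atTop, ∀ i ∈ F, ∀ k ∈ F, φ^[p * n] i ≠ φ^[q * n] k := by
  have hmul : Tendsto (fun n => (q - p) * n) atTop atTop :=
    tendsto_id.const_mul_atTop' (Nat.sub_pos_of_lt hpq)
  have hout : ∀ᶠ n in atTop, ∀ k ∈ F, φ^[(q - p) * n] k ∉ F :=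
    F.eventually_all.2 fun k _ => hmul.eventually (eventually_iterate_notMem hφ hp F k)
  filter_upwards [hout] with n hn i hi k hk h
  have hsplit : q * n = p * n + (q - p) * n := by rw [← add_mul, Nat.add_sub_cancel' hpq.le]
  rw [hsplit, Function.iterate_add_apply] at h
  exact hn k hk (hφ.iterate _ h ▸ hi)

theorem eventually_iterate_mul_ne (hφ : Function.Injective φ)
    (hp : ∀ i : I, ∀ M : ℕ, 1 ≤ M → φ^[M] i ≠ i) (F : Finset I) {p q : ℕ} (hpq : p ≠ q) :
    ∀ᶠ n in atTop, ∀ i ∈ F, ∀ k ∈ F, φ^[p * n] i ≠ φ^[q * n] k := by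
  rcases hpq.lt_or_gt with h | h
  · exact eventually_iterate_mul_ne_of_lt hφ hp F h
  · filter_upwards [eventually_iterate_mul_ne_of_lt hφ hp F h] with n hn i hi k hk
    exact (hn k hk i hi).symm

end Iterates

section GeometricSequences

variable {𝕜 : Type*} [NontriviallyNormedField 𝕜]

theorem exists_norm_le_mul_norm_of_geometric {u v : ℕ → 𝕜} {c d : 𝕜} {M : ℕ} (hM : M ≠ 0)
    (hu : ∀ n, u (n + M) = c * u n) (hv : ∀ n, v (n + M) = d * v n) (hcd : ‖c‖ ≤ ‖d‖) :
    ∃ K : ℝ, ∀ n, v n ≠ 0 → ‖u n‖ ≤ K * ‖v n‖ := by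
  refine ⟨∑ t ∈ Finset.range M, ‖u t‖ / ‖v t‖, fun n => ?_⟩
  induction n using Nat.strong_induction_on with
  | _ n ih =>
    intro hn
    rcases lt_or_ge n M with hnM | hnM
    · rw [← div_le_iff₀ (norm_pos_iff.2 hn)]
      exact Finset.single_le_sum (f := fun t => ‖u t‖ / ‖v t‖) (fun t _ => by positivity)
        (Finset.mem_range.2 hnM)
    · obtain ⟨m, rfl⟩ := Nat.exists_eq_add_of_le' hnM
      rw [hv] at hn
      have hm := ih m (by lia) (right_ne_zero_of_mul hn)
      rw [hu, hv, norm_mul, norm_mul, mul_left_comm]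
      gcongr

theorem not_dense_range_smul_of_geometric {u v : ℕ → 𝕜} {c d : 𝕜} {M : ℕ} (hM : M ≠ 0)
    (hu : ∀ n, u (n + M) = c * u n) (hv : ∀ n, v (n + M) = d * v n) (hcd : ‖c‖ ≤ ‖d‖) :
    ¬ Dense (Set.range fun p : 𝕜 × ℕ => p.1 • (u p.2, v p.2)) := by
  intro hdense
  obtain ⟨K, hK⟩ := exists_norm_le_mul_norm_of_geometric hM hu hv hcd
  let V : Set (𝕜 × 𝕜) := {w | K * ‖w.2‖ < ‖w.1‖ ∧ w.2 ≠ 0}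
  have hVopen : IsOpen V := (isOpen_lt (continuous_const.mul continuous_snd.norm)
    continuous_fst.norm).inter (isOpen_ne_fun continuous_snd continuous_const)
  obtain ⟨a, ha⟩ := NormedField.exists_lt_norm 𝕜 K
  obtain ⟨_, ⟨hlt, hne⟩, ⟨t, n⟩, rfl⟩ :=
    hdense.inter_open_nonempty V hVopen ⟨(a, 1), by simpa [V] using ha⟩
  simp only [Prod.smul_mk, smul_eq_mul, norm_mul] at hlt hne
  refine hlt.not_ge ?_
  rw [mul_left_comm]
  gcongr
  exact hK n (right_ne_zero_of_mul hne)

end GeometricSequences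

/-- The canonical unit vectors `e` form an OP-basis of the Banach sequence space given by the
coordinate map `J : X → 𝕜^I`. The coordinate functional `f_i` is `proj i ∘ J`. -/
structure IsOPBasis {𝕜 X I : Type*} [NontriviallyNormedField 𝕜] [NormedAddCommGroup X]
    [NormedSpace 𝕜 X] (J : X →L[𝕜] (I → 𝕜)) (e : I → X) : Prop where
  injective : Function.Injective J
  coord : ∀ i j, J (e i) j = if j = i then 1 else 0
  dense_span : Dense (Submodule.span 𝕜 (Set.range e) : Set X)
  exists_norm_mul_norm_le : ∃ C : ℝ, ∀ i, ‖e i‖ * ‖(ContinuousLinearMap.proj i).comp J‖ ≤ C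

/-- `T` is the weighted pseudo-shift `T_{b,φ}` with respect to the coordinate map `J`. -/
def IsWeightedPseudoShift {𝕜 X I : Type*} [NontriviallyNormedField 𝕜] [NormedAddCommGroup X]
    [NormedSpace 𝕜 X] (J : X →L[𝕜] (I → 𝕜)) (b : I → 𝕜) (φ : I → I) (T : X →L[𝕜] X) : Prop :=
  ∀ x i, J (T x) i = b i * J x (φ i)

/-- The weight `∏_{v=0}^{n-1} b_{φ^v(i)}` of the `n`-th power of `T_{b,φ}`. -/
def iterWeight {𝕜 I : Type*} [CommMonoid 𝕜] (φ : I → I) (b : I → 𝕜) (n : ℕ) (i : I) : 𝕜 :=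
  ∏ v ∈ Finset.range n, b (φ^[v] i)

/-- The vector `(∏_{v=0}^{n-1} b_{φ^v(i)})⁻¹ e_{φ^n(i)}`, which `T_{b,φ}^n` maps to `e_i`. -/
noncomputable def forwardVec {𝕜 X I : Type*} [Field 𝕜] [AddCommGroup X] [Module 𝕜 X]
    (φ : I → I) (b : I → 𝕜) (e : I → X) (n : ℕ) (i : I) : X :=
  (iterWeight φ b n i)⁻¹ • e (φ^[n] i)

section PseudoShift

variable {𝕜 X I : Type*} [NontriviallyNormedField 𝕜] [NormedAddCommGroup X] [NormedSpace 𝕜 X]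
  {J : X →L[𝕜] (I → 𝕜)} {e : I → X} {b : I → 𝕜} {φ : I → I} {T : X →L[𝕜] X}

theorem IsWeightedPseudoShift.pow (hT : IsWeightedPseudoShift J b φ T) (n : ℕ) :
    IsWeightedPseudoShift J (iterWeight φ b n) φ^[n] (T ^ n) := by
  induction n with
  | zero => intro x i; simp [iterWeight]
  | succ n ih =>
    intro x i
    rw [pow_succ, mul_apply_eq_comp, ih, hT, iterWeight, iterWeight, Finset.prod_range_succ,
      Function.iterate_succ_apply', mul_assoc]

theorem IsWeightedPseudoShift.apply_basis_comp (hT : IsWeightedPseudoShift J b φ T)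
    (he : IsOPBasis J e) (hφ : Function.Injective φ) (k : I) : T (e (φ k)) = b k • e k := by
  refine he.injective (funext fun i => ?_)
  rcases eq_or_ne i k with rfl | hik
  · simp [hT _ i, he.coord]
  · simp [hT _ i, he.coord, hik, hφ.ne hik]

theorem IsWeightedPseudoShift.apply_basis_of_notMem_range (hT : IsWeightedPseudoShift J b φ T)
    (he : IsOPBasis J e) {j : I} (hj : j ∉ Set.range φ) : T (e j) = 0 := by
  refine he.injective (funext fun i => ?_)
  have hij : φ i ≠ j := fun h => hj ⟨i, h⟩
  simp [hT _ i, he.coord, hij]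

theorem IsWeightedPseudoShift.pow_apply_forwardVec (hT : IsWeightedPseudoShift J b φ T)
    (he : IsOPBasis J e) (hφ : Function.Injective φ) (hb : ∀ i, b i ≠ 0) (n : ℕ) (i : I) :
    (T ^ n) (forwardVec φ b e n i) = e i := by
  have hw : iterWeight φ b n i ≠ 0 := Finset.prod_ne_zero_iff.2 fun v _ => hb _
  rw [forwardVec, map_smul, (hT.pow n).apply_basis_comp he (hφ.iterate n), inv_smul_smul₀ hw]

theorem IsOPBasis.exists_norm_coord_mul_norm_le (he : IsOPBasis J e) :
    ∃ C > 0, ∀ x i, ‖J x i‖ * ‖e i‖ ≤ C * ‖x‖ := by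
  obtain ⟨C, hC⟩ := he.exists_norm_mul_norm_le
  refine ⟨max C 1, by positivity, fun x i => ?_⟩
  calc ‖J x i‖ * ‖e i‖ ≤ ‖(ContinuousLinearMap.proj i).comp J‖ * ‖x‖ * ‖e i‖ := by
        gcongr; exact ((ContinuousLinearMap.proj i).comp J).le_opNorm x
    _ = ‖e i‖ * ‖(ContinuousLinearMap.proj i).comp J‖ * ‖x‖ := by ring
    _ ≤ max C 1 * ‖x‖ := by gcongr; exact (hC i).trans (le_max_left C 1)

theorem IsOPBasis.coord_sum (he : IsOPBasis J e) (F : Finset I) (i : I) :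
    J (∑ j ∈ F, e j) i = if i ∈ F then 1 else 0 := by
  simp [map_sum, he.coord]

end PseudoShift

section NearIndicator

variable {𝕜 X I : Type*} [NontriviallyNormedField 𝕜] [NormedAddCommGroup X] [NormedSpace 𝕜 X]
  {J : X →L[𝕜] (I → 𝕜)} {e : I → X} {F : Finset I} {η : ℝ}

/-- `z` is close to the indicator vector `∑ j ∈ F, e j`: its coordinates are at least `1/2` in
modulus on `F`, and its components `z_i e_i` have norm at most `η` off `F`. -/
structure IsNearIndicator (J : X →L[𝕜] (I → 𝕜)) (e : I → X) (F : Finset I) (η : ℝ) (z : X) :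
    Prop where
  half_le_norm : ∀ i ∈ F, 1 / 2 ≤ ‖J z i‖
  norm_mul_norm_le : ∀ i ∉ F, ‖J z i‖ * ‖e i‖ ≤ η

theorem IsOPBasis.eventually_isNearIndicator (he : IsOPBasis J e) (F : Finset I) (hη : 0 < η) :
    ∀ᶠ z in 𝓝 (∑ j ∈ F, e j), IsNearIndicator J e F η z := by
  obtain ⟨C, hC, hcoord⟩ := he.exists_norm_coord_mul_norm_le
  have hon : ∀ᶠ z in 𝓝 (∑ j ∈ F, e j), ∀ i ∈ F, 1 / 2 ≤ ‖J z i‖ := by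
    refine F.eventually_all.2 fun i hi => ?_
    have hcont : Continuous fun z => ‖J z i‖ := by fun_prop
    refine hcont.tendsto _ |>.eventually_const_le ?_
    rw [he.coord_sum, if_pos hi, norm_one]
    norm_num
  have hoff : ∀ᶠ z in 𝓝 (∑ j ∈ F, e j), ∀ i ∉ F, ‖J z i‖ * ‖e i‖ ≤ η := by
    filter_upwards [Metric.ball_mem_nhds _ (div_pos hη hC)] with z hz i hi
    rw [mem_ball_iff_norm, lt_div_iff₀' hC] at hz
    have hdiff : J (z - ∑ j ∈ F, e j) i = J z i := by
      rw [map_sub, Pi.sub_apply, he.coord_sum, if_neg hi, sub_zero]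
    exact hdiff ▸ (hcoord _ i).trans hz.le
  filter_upwards [hon, hoff] with z h₁ h₂ using ⟨h₁, h₂⟩

variable {b b' : I → 𝕜} {φ φ' : I → I} {T T' : X →L[𝕜] X} {x : X} {c : 𝕜}

theorem IsWeightedPseudoShift.norm_inv_le (hT : IsWeightedPseudoShift J b φ T)
    (hTx : IsNearIndicator J e F η (c • T x)) {i : I} (hi : i ∈ F) :
    ‖(b i)⁻¹‖ ≤ 2 * (‖c‖ * ‖J x (φ i)‖) := by
  have hhalf : 1 / 2 ≤ ‖c‖ * (‖b i‖ * ‖J x (φ i)‖) := by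
    simpa [hT x i] using hTx.half_le_norm i hi
  have hb : 0 < ‖b i‖ := by
    refine norm_pos_iff.2 fun h => ?_
    norm_num [h] at hhalf
  rw [norm_inv, inv_le_iff_one_le_mul₀' hb]
  linarith

theorem IsWeightedPseudoShift.norm_mul_norm_apply_basis_le (hT : IsWeightedPseudoShift J b φ T)
    (he : IsOPBasis J e) (hφ : Function.Injective φ) (hη : 0 ≤ η)
    (hTx : IsNearIndicator J e F η (c • T x)) {j : I} (hj : ∀ k ∈ F, φ k ≠ j) :
    ‖c‖ * ‖J x j‖ * ‖T (e j)‖ ≤ η := by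
  by_cases hrange : j ∈ Set.range φ
  · obtain ⟨k, rfl⟩ := hrange
    calc ‖c‖ * ‖J x (φ k)‖ * ‖T (e (φ k))‖ = ‖J (c • T x) k‖ * ‖e k‖ := by
          simp only [hT.apply_basis_comp he hφ, map_smul, Pi.smul_apply, hT x k, norm_smul,
            smul_eq_mul, norm_mul]
          ring
      _ ≤ η := hTx.norm_mul_norm_le k fun hk => hj k hk rfl
  · rwa [hT.apply_basis_of_notMem_range he hrange, norm_zero, mul_zero]

theorem IsWeightedPseudoShift.norm_inv_smul_mul_norm_apply_basis_le
    (hT : IsWeightedPseudoShift J b φ T) (hT' : IsWeightedPseudoShift J b' φ' T')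
    (he : IsOPBasis J e) (hφ' : Function.Injective φ') (hη : 0 ≤ η)
    (hx : IsNearIndicator J e F η x) (hTx : IsNearIndicator J e F η (c • T x))
    (hTx' : IsNearIndicator J e F η (c • T' x)) {i j : I} (hi : i ∈ F) (hφi : φ i ∉ F)
    (hj : j ∈ F) (hφj : ∀ k ∈ F, φ' k ≠ j) :
    ‖(b i)⁻¹ • e (φ i)‖ * ‖T' (e j)‖ ≤ 2 * η * (2 * η) := by
  have hforward : ‖(b i)⁻¹ • e (φ i)‖ ≤ 2 * η * ‖c‖ := by
    calc ‖(b i)⁻¹ • e (φ i)‖ ≤ 2 * (‖c‖ * ‖J x (φ i)‖) * ‖e (φ i)‖ := by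
          rw [norm_smul]
          gcongr
          exact hT.norm_inv_le hTx hi
      _ = 2 * ‖c‖ * (‖J x (φ i)‖ * ‖e (φ i)‖) := by ring
      _ ≤ 2 * ‖c‖ * η := by gcongr; exact hx.norm_mul_norm_le _ hφi
      _ = 2 * η * ‖c‖ := by ring
  have hbackward : ‖c‖ * ‖T' (e j)‖ ≤ 2 * η := by
    have hbound := hT'.norm_mul_norm_apply_basis_le he hφ' hη hTx' hφj
    have hhalf : 1 / 2 * (‖c‖ * ‖T' (e j)‖) ≤ ‖J x j‖ * (‖c‖ * ‖T' (e j)‖) := by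
      gcongr
      exact hx.half_le_norm j hj
    linarith
  calc ‖(b i)⁻¹ • e (φ i)‖ * ‖T' (e j)‖ ≤ 2 * η * ‖c‖ * ‖T' (e j)‖ := by gcongr
    _ = 2 * η * (‖c‖ * ‖T' (e j)‖) := by ring
    _ ≤ 2 * η * (2 * η) := by gcongr

theorem IsWeightedPseudoShift.norm_apply_inv_smul_le
    (hT : IsWeightedPseudoShift J b φ T) (hT' : IsWeightedPseudoShift J b' φ' T')
    (he : IsOPBasis J e) (hφ' : Function.Injective φ') (hη : 0 ≤ η)
    (hTx : IsNearIndicator J e F η (c • T x)) (hTx' : IsNearIndicator J e F η (c • T' x))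
    {i : I} (hi : i ∈ F) (hφi : ∀ k ∈ F, φ' k ≠ φ i) :
    ‖T' ((b i)⁻¹ • e (φ i))‖ ≤ 2 * η := by
  calc ‖T' ((b i)⁻¹ • e (φ i))‖ ≤ 2 * (‖c‖ * ‖J x (φ i)‖) * ‖T' (e (φ i))‖ := by
        rw [map_smul, norm_smul]
        gcongr
        exact hT.norm_inv_le hTx hi
    _ = 2 * (‖c‖ * ‖J x (φ i)‖ * ‖T' (e (φ i))‖) := by ring
    _ ≤ 2 * η := by
        gcongr
        exact hT'.norm_mul_norm_apply_basis_le he hφ' hη hTx' hφi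

end NearIndicator

theorem not_finiteDimensional_pi {K V ι : Type*} [DivisionRing K] [AddCommGroup V] [Module K V]
    [Nonempty ι] (hV : ¬ FiniteDimensional K V) : ¬ FiniteDimensional K (ι → V) := fun _ => hV <|
  Module.Finite.of_surjective (LinearMap.proj (Classical.arbitrary ι) : (ι → V) →ₗ[K] V)
    (LinearMap.proj_surjective _)

section DSupercyclicity

variable {𝕜 X I ι : Type*} [NontriviallyNormedField 𝕜] [NormedAddCommGroup X] [NormedSpace 𝕜 X]
  {J : X →L[𝕜] (I → 𝕜)} {e : I → X} {φ : I → I} {b : ι → I → 𝕜} {T : ι → X →L[𝕜] X} {r : ι → ℕ}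

/-- The operator `x ↦ (T₁^{r₁ n} x, …, T_N^{r_N n} x)`; the supercyclic vectors of this sequence are
the d-supercyclic vectors of `T₁^{r₁}, …, T_N^{r_N}`. -/
def jointPow (T : ι → X →L[𝕜] X) (r : ι → ℕ) (n : ℕ) : X →L[𝕜] (ι → X) :=
  ContinuousLinearMap.pi fun l => T l ^ (r l * n)

/-- Conditions (H1) and (H2) along the sequence `n`. The backward products of the paper are encoded
through `T_s^{r_s n_k} e_j = (∏_{v=1}^{r_s n_k} b^{(s)}_{ψ^v(j)}) e_{ψ^{r_s n_k}(j)}`; the two parts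
of (H2) are the cases `s < l` and `l < s` of the second field. -/
structure DSupercyclicityCriterion (e : I → X) (φ : I → I) (b : ι → I → 𝕜) (T : ι → X →L[𝕜] X)
    (r : ι → ℕ) (n : ℕ → ℕ) : Prop where
  tendsto_norm_mul_norm : ∀ i j l s, Tendsto (fun k =>
    ‖forwardVec φ (b l) e (r l * n k) i‖ * ‖(T s ^ (r s * n k)) (e j)‖) atTop (𝓝 0)
  tendsto_norm_apply : ∀ i, Pairwise fun s l => Tendsto (fun k =>
    ‖(T l ^ (r l * n k)) (forwardVec φ (b s) e (r s * n k) i)‖) atTop (𝓝 0)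

theorem iterate_ne_of_mem_supercyclicVectors [Nontrivial ι] (he : IsOPBasis J e)
    (hT : ∀ l, IsWeightedPseudoShift J (b l) φ (T l)) {x : X}
    (hx : x ∈ supercyclicVectors (jointPow T r))
    (i : I) {M : ℕ} (hM : 1 ≤ M) : φ^[M] i ≠ i := by
  intro hi
  let c : ι → 𝕜 := fun l => iterWeight φ (b l) (r l * M) i
  have hgeom : ∀ l n, J ((T l ^ (r l * (n + M))) x) i = c l * J ((T l ^ (r l * n)) x) i := by
    intro l n
    have hper : φ^[r l * M] i = i := Function.IsPeriodicPt.const_mul hi (r l)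
    rw [mul_add, add_comm, pow_add, mul_apply_eq_comp, (hT l).pow, hper]
  obtain ⟨l, s, hls, hle⟩ : ∃ l s, l ≠ s ∧ ‖c l‖ ≤ ‖c s‖ := by
    obtain ⟨l, s, hls⟩ := exists_pair_ne ι
    rcases le_total ‖c l‖ ‖c s‖ with h | h
    exacts [⟨l, s, hls, h⟩, ⟨s, l, hls.symm, h⟩]
  let P : (ι → X) → 𝕜 × 𝕜 := fun y => (J (y l) i, J (y s) i)
  have hPcont : Continuous P := by fun_prop
  have hPsurj : Function.Surjective P := fun w =>
    ⟨Function.update (fun _ => w.2 • e i) l (w.1 • e i), by simp [P, he.coord, hls.symm]⟩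
  refine not_dense_range_smul_of_geometric (u := fun n => J ((T l ^ (r l * n)) x) i)
    (v := fun n => J ((T s ^ (r s * n)) x) i) (Nat.one_le_iff_ne_zero.1 hM)
    (hgeom l) (hgeom s) hle ?_
  convert hPsurj.denseRange.dense_image hPcont hx
  rw [← Set.range_comp]
  congr 1
  funext p
  simp [P, jointPow]

theorem frequently_norm_mul_norm_le_and_norm_apply_le [CompleteSpace 𝕜] [Finite ι] [Nonempty ι]
    (hX : ¬ FiniteDimensional 𝕜 X) (he : IsOPBasis J e) (hφ : Function.Injective φ)
    (hp : ∀ i M, 1 ≤ M → φ^[M] i ≠ i) (hr₁ : ∀ l, 1 ≤ r l) (hr : Function.Injective r)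
    (hT : ∀ l, IsWeightedPseudoShift J (b l) φ (T l))
    (hD : Dense (supercyclicVectors (jointPow T r))) (F : Finset I) {ε : ℝ} (hε : 0 < ε) :
    ∃ᶠ n in atTop,
      (∀ i ∈ F, ∀ j ∈ F, ∀ l s,
        ‖forwardVec φ (b l) e (r l * n) i‖ * ‖(T s ^ (r s * n)) (e j)‖ ≤ ε) ∧
      ∀ i ∈ F, Pairwise fun s l => ‖(T l ^ (r l * n)) (forwardVec φ (b s) e (r s * n) i)‖ ≤ ε := by
  obtain ⟨η, hη, hη₁, hηε⟩ : ∃ η : ℝ, 0 < η ∧ 2 * η * (2 * η) ≤ ε ∧ 2 * η ≤ ε := by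
    refine ⟨min 1 (ε / 4), by positivity, ?_, ?_⟩ <;>
      nlinarith [min_le_left 1 (ε / 4), min_le_right 1 (ε / 4), (by positivity : 0 < min 1 (ε / 4))]
  have hnear := he.eventually_isNearIndicator F hη
  obtain ⟨x, hxD, hx⟩ := hD.inter_nhds_nonempty hnear
  have hnearPi : ∀ᶠ y in 𝓝 (fun _ : ι => ∑ j ∈ F, e j), ∀ l, IsNearIndicator J e F η (y l) :=
    eventually_all.2 fun l => (continuous_apply l).continuousAt.eventually hnear
  have hout : ∀ᶠ n in atTop, ∀ l, ∀ i ∈ F, φ^[r l * n] i ∉ F :=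
    eventually_all.2 fun l => F.eventually_all.2 fun i _ =>
      (tendsto_id.const_mul_atTop' (hr₁ l)).eventually (eventually_iterate_notMem hφ hp F i)
  have hne : ∀ᶠ n in atTop, ∀ s l, s ≠ l → ∀ k ∈ F, ∀ i ∈ F, φ^[r l * n] k ≠ φ^[r s * n] i :=
    eventually_all.2 fun s => eventually_all.2 fun l => eventually_imp_distrib_left.2 fun hsl =>
      eventually_iterate_mul_ne hφ hp F (hr.ne hsl.symm)
  refine ((frequently_exists_smul_mem (not_finiteDimensional_pi hX) hxD hnearPi).and_eventually
    (hout.and hne)).mono ?_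
  rintro n ⟨⟨c, hc⟩, hout, hne⟩
  refine ⟨fun i hi j hj l s => ?_, fun i hi s l hsl => ?_⟩
  · exact (((hT l).pow _).norm_inv_smul_mul_norm_apply_basis_le ((hT s).pow _) he (hφ.iterate _)
      hη.le hx (hc l) (hc s) hi (hout l i hi) hj fun k hk h => hout s k hk (h ▸ hj)).trans hη₁
  · exact (((hT s).pow _).norm_apply_inv_smul_le ((hT l).pow _) he (hφ.iterate _) hη.le
      (hc s) (hc l) hi fun k hk => hne s l hsl k hk i hi).trans hηε

theorem exists_dSupercyclicityCriterion [CompleteSpace 𝕜] [Finite ι] [Nonempty ι] [Countable I]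
    (hX : ¬ FiniteDimensional 𝕜 X) (he : IsOPBasis J e) (hφ : Function.Injective φ)
    (hp : ∀ i M, 1 ≤ M → φ^[M] i ≠ i) (hr₁ : ∀ l, 1 ≤ r l) (hr : Function.Injective r)
    (hT : ∀ l, IsWeightedPseudoShift J (b l) φ (T l))
    (hD : Dense (supercyclicVectors (jointPow T r))) :
    ∃ n : ℕ → ℕ, StrictMono n ∧ (∀ k, 1 ≤ n k) ∧ DSupercyclicityCriterion e φ b T r n := by
  obtain ⟨F, -, hF⟩ := exists_seq_monotone_tendsto_atTop_atTop (Finset I)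
  have hmem : ∀ i, ∀ᶠ k in atTop, i ∈ F k := fun i =>
    (hF.eventually_ge_atTop {i}).mono fun k => Finset.singleton_subset_iff.1
  have hlim : Tendsto (fun k : ℕ => 1 / ((k : ℝ) + 1)) atTop (𝓝 0) :=
    tendsto_one_div_add_atTop_nhds_zero_nat
  obtain ⟨n, hn, hbound⟩ := extraction_forall_of_frequently fun k =>
    (frequently_norm_mul_norm_le_and_norm_apply_le hX he hφ hp hr₁ hr hT hD (F k)
      (Nat.one_div_pos_of_nat (α := ℝ) (n := k))).and_eventually (eventually_ge_atTop 1)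
  refine ⟨n, hn, fun k => (hbound k).2, fun i j l s => ?_, fun i s l hsl => ?_⟩
  · refine squeeze_zero' (Eventually.of_forall fun k => by positivity) ?_ hlim
    filter_upwards [hmem i, hmem j] with k hi hj using (hbound k).1.1 i hi j hj l s
  · refine squeeze_zero' (Eventually.of_forall fun k => by positivity) ?_ hlim
    filter_upwards [hmem i] with k hi using (hbound k).1.2 i hi hsl

theorem DSupercyclicityCriterion.dense_supercyclicVectors [CompleteSpace X]
    [TopologicalSpace.SeparableSpace X] [Finite ι] {n : ℕ → ℕ}
    (h : DSupercyclicityCriterion e φ b T r n) (he : IsOPBasis J e) (hφ : Function.Injective φ)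
    (hb : ∀ l i, b l i ≠ 0) (hT : ∀ l, IsWeightedPseudoShift J (b l) φ (T l)) :
    Dense (supercyclicVectors (jointPow T r)) := by
  have := Fintype.ofFinite ι
  have : SecondCountableTopology X := UniformSpace.secondCountable_of_separable X
  refine (dense_supercyclicVectors_of_tendsto he.dense_span
    (dense_span_range_single (ι := ι) he.dense_span)
    (R := fun k => jointPow T r (n k))
    (u := fun p k => forwardVec φ (b p.1) e (r p.1 * n k) p.2) ?_ ?_).mono
    (supercyclicVectors_comp_subset (jointPow T r) n)
  · rintro ⟨s, i⟩
    refine tendsto_pi_nhds.2 fun l => ?_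
    rcases eq_or_ne s l with rfl | hsl
    · simp only [jointPow, ContinuousLinearMap.coe_pi', Pi.single_eq_same,
        (hT s).pow_apply_forwardVec he hφ (hb s), tendsto_const_nhds]
    · rw [Pi.single_eq_of_ne' hsl]
      exact tendsto_zero_iff_norm_tendsto_zero.2 (h.tendsto_norm_apply i hsl)
  · rintro ⟨l, i⟩ j
    have hsum : Tendsto (fun k => ∑ s, ‖forwardVec φ (b l) e (r l * n k) i‖ *
        ‖(T s ^ (r s * n k)) (e j)‖) atTop (𝓝 0) := by
      simpa using tendsto_finsetSum Finset.univ fun s _ => h.tendsto_norm_mul_norm i j l s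
    refine squeeze_zero (fun k => by positivity) (fun k => ?_) hsum
    rw [← Finset.mul_sum]
    gcongr
    refine (pi_norm_le_iff_of_nonneg (by positivity)).2 fun s => ?_
    exact Finset.single_le_sum (f := fun s => ‖(T s ^ (r s * n k)) (e j)‖)
      (fun s _ => norm_nonneg _) (Finset.mem_univ s)

theorem stmt5_general [CompleteSpace 𝕜] [CompleteSpace X] [TopologicalSpace.SeparableSpace X]
    (hX : ¬ FiniteDimensional 𝕜 X) [Countable I] [Finite ι] [Nontrivial ι] (he : IsOPBasis J e)
    (hφ : Function.Injective φ) (hr₁ : ∀ l, 1 ≤ r l) (hr : Function.Injective r)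
    (hb : ∀ l i, b l i ≠ 0) (hT : ∀ l, IsWeightedPseudoShift J (b l) φ (T l)) :
    Dense (supercyclicVectors (jointPow T r)) ↔
      (∀ i M, 1 ≤ M → φ^[M] i ≠ i) ∧
        ∃ n : ℕ → ℕ, StrictMono n ∧ (∀ k, 1 ≤ n k) ∧ DSupercyclicityCriterion e φ b T r n := by
  refine ⟨fun hD => ?_, fun ⟨_, n, _, _, hn⟩ => hn.dense_supercyclicVectors he hφ hb hT⟩
  obtain ⟨x, hx⟩ := hD.nonempty
  have hp : ∀ i M, 1 ≤ M → φ^[M] i ≠ i := fun i _ hM =>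
    iterate_ne_of_mem_supercyclicVectors he hT hx i hM
  exact ⟨hp, exists_dSupercyclicityCriterion hX he hφ hp hr₁ hr hT hD⟩

end DSupercyclicity

theorem pairwise_iff_forall_lt {α : Type*} [LinearOrder α] {R : α → α → Prop} :
    Pairwise R ↔ ∀ s l, s < l → R s l ∧ R l s :=
  ⟨fun h _ _ hsl => ⟨h hsl.ne, h hsl.ne'⟩, fun h s l hsl =>
    hsl.lt_or_gt.elim (fun hlt => (h s l hlt).1) fun hlt => (h l s hlt).2⟩

section BackVec

variable {X I : Type*} [NormedAddCommGroup X] [NormedSpace ℂ X]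
  {J : X →L[ℂ] (I → ℂ)} {e : I → X} {φ : I → I}

theorem backVec_eq_pow_apply {b : I → ℂ} {T : X →L[ℂ] X}
    (hT : IsWeightedPseudoShift J b φ T) (he : IsOPBasis J e) (hφ : Function.Injective φ)
    (n : ℕ) (j : I) : backVec φ b e n j = (T ^ n) (e j) := by
  rw [backVec]
  split_ifs with h
  · conv_rhs => rw [← Classical.choose_spec h]
    exact ((hT.pow n).apply_basis_comp he (hφ.iterate n) _).symm
  · exact ((hT.pow n).apply_basis_of_notMem_range he h).symm

theorem dSupercyclicityCriterion_iff_backVec {ι : Type*} [LinearOrder ι] {b : ι → I → ℂ}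
    {T : ι → X →L[ℂ] X} {r : ι → ℕ}
    (hT : ∀ l, IsWeightedPseudoShift J (b l) φ (T l)) (he : IsOPBasis J e)
    (hφ : Function.Injective φ) (n : ℕ → ℕ) :
    DSupercyclicityCriterion e φ b T r n ↔
      (∀ i j, ∀ l s, Tendsto (fun k => ‖(∏ v ∈ Finset.range (r l * n k), b l (φ^[v] i))⁻¹ •
          e (φ^[r l * n k] i)‖ * ‖backVec φ (b s) e (r s * n k) j‖) atTop (𝓝 0)) ∧
      (∀ i, ∀ s l, s < l →
        Tendsto (fun k => ‖(∏ v ∈ Finset.range (r s * n k), b s (φ^[v] i))⁻¹ •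
          backVec φ (b l) e (r l * n k) (φ^[r s * n k] i)‖) atTop (𝓝 0) ∧
        Tendsto (fun k => ‖(∏ v ∈ Finset.range (r l * n k), b l (φ^[v] i))⁻¹ •
          backVec φ (b s) e (r s * n k) (φ^[r l * n k] i)‖) atTop (𝓝 0)) := by
  simp only [backVec_eq_pow_apply (hT _) he hφ, ← map_smul]
  exact ⟨fun h => ⟨h.1, fun i => pairwise_iff_forall_lt.1 (h.2 i)⟩,
    fun h => ⟨h.1, fun i => pairwise_iff_forall_lt.2 (h.2 i)⟩⟩

end BackVec

theorem stmt5
    {X : Type*} [NormedAddCommGroup X] [NormedSpace ℂ X] [CompleteSpace X]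
    [TopologicalSpace.SeparableSpace X] (hinfdim : ¬ FiniteDimensional ℂ X)
    {I : Type*} [Countable I] [Infinite I]
    (J : X →L[ℂ] (I → ℂ)) (hJ : Function.Injective J)
    (e : I → X) (he : ∀ i j : I, J (e i) j = if j = i then 1 else 0)
    (f : I → X →L[ℂ] ℂ) (hf : ∀ (i : I) (x : X), f i x = J x i)
    (hdense : Dense (Submodule.span ℂ (Set.range e) : Set X))
    (hOP : ∃ C : ℝ, ∀ i : I, ‖e i‖ * ‖f i‖ ≤ C)
    (φ : I → I) (hφ : Function.Injective φ)
    {N : ℕ} (hN : 2 ≤ N)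
    (r : Fin N → ℕ) (hr1 : ∀ l, 1 ≤ r l) (hr : StrictMono r)
    (b : Fin N → I → ℂ) (hb : ∀ l i, b l i ≠ 0)
    (T : Fin N → X →L[ℂ] X)
    (hT : ∀ (l : Fin N) (x : X) (i : I), J (T l x) i = b l i * J x (φ i)) :
    Dense {x : X | Dense (Set.range fun p : ℂ × ℕ =>
        fun l : Fin N => p.1 • (((T l) ^ (r l * p.2)) x))}
      ↔
    ((∀ i : I, ∀ M : ℕ, 1 ≤ M → φ^[M] i ≠ i) ∧
      ∃ n : ℕ → ℕ, StrictMono n ∧ (∀ k, 1 ≤ n k) ∧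
        (∀ i j : I, ∀ l s : Fin N,
          Tendsto (fun k => ‖(∏ v ∈ Finset.range (r l * n k), b l (φ^[v] i))⁻¹ •
                e (φ^[r l * n k] i)‖ *
              ‖backVec φ (b s) e (r s * n k) j‖) atTop (𝓝 0)) ∧
        (∀ i : I, ∀ s l : Fin N, s < l →
          Tendsto (fun k => ‖(∏ v ∈ Finset.range (r s * n k), b s (φ^[v] i))⁻¹ •
              backVec φ (b l) e (r l * n k) (φ^[r s * n k] i)‖) atTop (𝓝 0) ∧
          Tendsto (fun k => ‖(∏ v ∈ Finset.range (r l * n k), b l (φ^[v] i))⁻¹ •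
              backVec φ (b s) e (r s * n k) (φ^[r l * n k] i)‖) atTop (𝓝 0))) := by
  have : Nontrivial (Fin N) := Fin.nontrivial_iff_two_le.2 hN
  obtain rfl : f = fun i => (ContinuousLinearMap.proj i).comp J :=
    funext fun i => ContinuousLinearMap.ext (hf i)
  have hbasis : IsOPBasis J e := ⟨hJ, he, hdense, hOP⟩
  simp only [← dSupercyclicityCriterion_iff_backVec hT hbasis hφ]
  exact stmt5_general hinfdim hbasis hφ hr1 hr.injective hb hT
end

section
/- Let T be the bilateral forward operator weighted shift on ℓ²(ℤ,K) with weight sequence (A_n)_{n∈ℤ}, where (A_n)_{n∈ℤ} is a uniformly bounded sequence of positive invertible diagonal operators on K, and suppose there exists m > 0 such that ‖A_n^{−1}‖ ≤ m for all n < 0, or ‖A_n^{−1}‖ ≤ m for all n > 0. Then for any integer N ≥ 2 the following are equivalent: (1) T, T², …, T^N are densely d-supercyclic; (2) there exists a strictly increasing sequence (n_k)_{k≥1} of positive integers such that: for every i₁, i₂ ∈ ℕ and every 1 ≤ l ≤ N, ‖(∏_{v=1}^{l n_k} (A_{−v})^{−1}) f_{i₁}‖ · ‖(∏_{v=1}^{N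 n_k} A_v) f_{i₂}‖ → 0 and ‖(∏_{v=1}^{N n_k} (A_{−v})^{−1}) f_{i₁}‖ · ‖(∏_{v=1}^{l n_k} A_v) f_{i₂}‖ → 0 as k → ∞; and for every i ∈ ℕ and every 1 ≤ l ≤ N−1, ‖(∏_{v=1}^{l n_k} (A_{−v})^{−1}) f_i‖ → 0 and ‖(∏_{v=1}^{l n_k} A_v) f_i‖ → 0 as k → ∞. -/
open Filter Topology

/-! Necessity: if `x` approximates the vector with coordinates `1` at positions `0` and `1`, and
`c • T ^ (l n) x` approximates `l` times it for all `l ≤ N`, then the coordinates of `x` at `-l n`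
and those of `c • T ^ (l n) x` at `1 + l n` are small. These coordinates are known up to the
backward and forward weight products, which are therefore small, up to factors `‖c‖` that cancel.

Sufficiency: rescaling the basis vectors turns `T` into an unweighted shift of a family `u (i, j)`
with dense span, so every finite combination of the `u (i, j)` has exact preimages under all powers
of `T`. If `P` and `Q` bound the forward and backward products at time `n`, the hypotheses give
`Q P → 0`, and `c = √(Q / P)` makes both `c P` and `c⁻¹ Q` tend to `0`: this is a supercyclicity
criterion, and Baire's theorem concludes. The products in the hypotheses start at positions `1` and
`-1`; changing every time `n` by a large constant adapts them to any finite set of positions, and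
the one-sided bound on the inverse weights decides the sign of that constant.
-/

section DSupercyclic

theorem dense_setOf_denseRange_of_transitive {P X Y : Type*} [TopologicalSpace X] [BaireSpace X]
    [TopologicalSpace Y] [SecondCountableTopology Y] {φ : P → X → Y} (hφ : ∀ p, Continuous (φ p))
    (h : ∀ U : Set X, IsOpen U → U.Nonempty → ∀ V : Set Y, IsOpen V → V.Nonempty →
      ∃ x ∈ U, ∃ p, φ p x ∈ V) :
    Dense {x | DenseRange fun p => φ p x} := by
  have hB := TopologicalSpace.isBasis_countableBasis Y
  have hdense : Dense (⋂ V ∈ TopologicalSpace.countableBasis Y, ⋃ p, φ p ⁻¹' V) := by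
    refine dense_biInter_of_isOpen
      (fun V hV => isOpen_iUnion fun p => (hB.isOpen hV).preimage (hφ p))
      (TopologicalSpace.countable_countableBasis Y) fun V hV => ?_
    refine dense_iff_inter_open.2 fun U hU hUne => ?_
    obtain ⟨x, hxU, p, hp⟩ :=
      h U hU hUne V (hB.isOpen hV) (TopologicalSpace.nonempty_of_mem_countableBasis hV)
    exact ⟨x, hxU, Set.mem_iUnion.2 ⟨p, hp⟩⟩
  refine hdense.mono fun x hx => hB.dense_iff.2 fun V hV _ => ?_
  obtain ⟨p, hp⟩ := Set.mem_iUnion.1 (Set.mem_iInter₂.1 hx V hV)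
  exact ⟨φ p x, hp, p, rfl⟩

variable {𝕜 X κ : Type*} [NontriviallyNormedField 𝕜] [NormedAddCommGroup X] [NormedSpace 𝕜 X]

/-- The d-supercyclic vectors of a family `T` of operators: those `x` for which the multiples of
the points `(T l ^ n) x`, taken jointly in `l`, are dense in the product space. -/
def dSupercyclicVectors (T : κ → X →L[𝕜] X) : Set X :=
  {x | Dense (Set.range fun p : 𝕜 × ℕ => fun l => p.1 • (T l ^ p.2) x)}

theorem dense_dSupercyclicVectors_of_tendsto [Finite κ] [DecidableEq κ] [CompleteSpace X]
    [TopologicalSpace.SeparableSpace X] {D : Set X} (hD : Dense D) {T : κ → X →L[𝕜] X}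
    (h : ∀ x ∈ D, ∀ y : κ → X, (∀ l, y l ∈ D) →
      ∃ (n : ℕ → ℕ) (c : ℕ → 𝕜) (z : κ → ℕ → X), (∀ k, c k ≠ 0) ∧
        (∀ l, Tendsto (fun k => c k • (T l ^ n k) x) atTop (𝓝 0)) ∧
        (∀ l, Tendsto (fun k => (c k)⁻¹ • z l k) atTop (𝓝 0)) ∧
        ∀ l l', Tendsto (fun k => (T l ^ n k) (z l' k)) atTop (𝓝 (if l' = l then y l else 0))) :
    Dense (dSupercyclicVectors T) := by
  have := Fintype.ofFinite κ
  have : SecondCountableTopology X := UniformSpace.secondCountable_of_separable X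
  refine dense_setOf_denseRange_of_transitive (fun p => by fun_prop) fun U hU hUne V hV hVne => ?_
  obtain ⟨x, hxU, hxD⟩ := hD.inter_open_nonempty U hU hUne
  obtain ⟨y, hyV, hyD⟩ := (dense_pi Set.univ fun _ _ => hD).inter_open_nonempty V hV hVne
  obtain ⟨n, c, z, hc, hx, hz, hTz⟩ := h x hxD y fun l => hyD l trivial
  let w : ℕ → X := fun k => x + ∑ l, (c k)⁻¹ • z l k
  have hw : Tendsto w atTop (𝓝 x) := by
    simpa using (tendsto_finsetSum Finset.univ fun l _ => hz l).const_add x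
  have hTw : Tendsto (fun k l => c k • (T l ^ n k) (w k)) atTop (𝓝 y) := by
    refine tendsto_pi_nhds.2 fun l => ?_
    have hsum : ∀ k, c k • (T l ^ n k) x + ∑ l', (T l ^ n k) (z l' k) =
        c k • (T l ^ n k) (w k) := fun k => by
      simp only [w, map_add, map_sum, map_smul, smul_add, Finset.smul_sum, smul_inv_smul₀ (hc k)]
    refine Tendsto.congr hsum ?_
    simpa using (hx l).add (tendsto_finsetSum Finset.univ fun l' _ => hTz l l')
  obtain ⟨k, hkU, hkV⟩ :=
    ((hw.eventually (hU.mem_nhds hxU)).and (hTw.eventually (hV.mem_nhds hyV))).exists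
  exact ⟨w k, hkU, (c k, n k), hkV⟩

end DSupercyclic

section WeightProducts

variable {𝕜 : Type*} [NormedField 𝕜]

/-- The product `a₁ a₂ ⋯ aₘ`. -/
def forwardProd (a : ℤ → 𝕜) (m : ℕ) : 𝕜 := ∏ v ∈ Finset.Icc 1 m, a (v : ℤ)

/-- The product `a₋₁⁻¹ a₋₂⁻¹ ⋯ a₋ₘ⁻¹`. -/
def backwardProd (a : ℤ → 𝕜) (m : ℕ) : 𝕜 := ∏ v ∈ Finset.Icc 1 m, (a (-(v : ℤ)))⁻¹

theorem forwardProd_succ (a : ℤ → 𝕜) (m : ℕ) :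
    forwardProd a (m + 1) = a (1 + m) * forwardProd a m := by
  rw [forwardProd, Finset.prod_Icc_succ_top (by lia), mul_comm, forwardProd]
  congr 2
  push_cast
  ring

theorem backwardProd_succ (a : ℤ → 𝕜) (m : ℕ) :
    backwardProd a (m + 1) = (a (-(m + 1)))⁻¹ * backwardProd a m := by
  rw [backwardProd, Finset.prod_Icc_succ_top (by lia), mul_comm, backwardProd]
  push_cast
  rfl

theorem forwardProd_ne_zero {a : ℤ → 𝕜} (ha : ∀ j, a j ≠ 0) (m : ℕ) : forwardProd a m ≠ 0 :=
  Finset.prod_ne_zero_iff.2 fun _ _ => ha _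

theorem backwardProd_ne_zero {a : ℤ → 𝕜} (ha : ∀ j, a j ≠ 0) (m : ℕ) : backwardProd a m ≠ 0 :=
  Finset.prod_ne_zero_iff.2 fun _ _ => inv_ne_zero (ha _)

/-- The solution of `w (j + 1) = a j * w j` with `w 0 = 1`: rescaling the basis of a weighted shift
by it turns all weights into `1`. At most one of the two products is nonempty. -/
noncomputable def potential (a : ℤ → 𝕜) (j : ℤ) : 𝕜 :=
  (∏ v ∈ Finset.Ico 0 j, a v) * (∏ v ∈ Finset.Ico j 0, a v)⁻¹

variable {a : ℤ → 𝕜}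

theorem potential_ne_zero (ha : ∀ j, a j ≠ 0) (j : ℤ) : potential a j ≠ 0 :=
  mul_ne_zero (Finset.prod_ne_zero_iff.2 fun v _ => ha v)
    (inv_ne_zero (Finset.prod_ne_zero_iff.2 fun v _ => ha v))

theorem potential_add_one (ha : ∀ j, a j ≠ 0) (j : ℤ) :
    potential a (j + 1) = a j * potential a j := by
  rcases le_or_gt 0 j with hj | hj
  · rw [potential, potential, ← Finset.prod_Ico_mul_eq_prod_Ico_add_one hj,
      Finset.Ico_eq_empty_of_le hj, Finset.Ico_eq_empty_of_le (by lia : (0 : ℤ) ≤ j + 1)]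
    ring
  · rw [potential, potential, ← Finset.insert_Ico_add_one_left_eq_Ico hj,
      Finset.prod_insert (by simp), Finset.Ico_eq_empty_of_le hj.le,
      Finset.Ico_eq_empty_of_le (by lia : j + 1 ≤ 0),
      mul_inv, mul_left_comm, mul_inv_cancel_left₀ (ha j)]

theorem potential_add_natCast (ha : ∀ j, a j ≠ 0) (j : ℤ) (d : ℕ) :
    potential a (j + d) = (∏ v ∈ Finset.range d, a (j + v)) * potential a j := by
  induction d with
  | zero => simp
  | succ d ih =>
    rw [Nat.cast_succ, ← add_assoc, potential_add_one ha, ih, Finset.prod_range_succ_comm,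
      mul_assoc]

theorem potential_one_add (ha : ∀ j, a j ≠ 0) (m : ℕ) :
    potential a (1 + m) = potential a 1 * forwardProd a m := by
  induction m with
  | zero => simp [forwardProd]
  | succ m ih =>
    rw [Nat.cast_succ, ← add_assoc, potential_add_one ha, ih, forwardProd_succ, mul_left_comm]

theorem potential_neg (ha : ∀ j, a j ≠ 0) (m : ℕ) :
    potential a (-m) = backwardProd a m := by
  induction m with
  | zero => simp [potential, backwardProd]
  | succ m ih =>
    have hstep := potential_add_one ha (-(m + 1 : ℤ))
    rw [neg_add_rev, neg_add_cancel_comm, ih] at hstep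
    rw [backwardProd_succ, hstep, neg_add_rev, inv_mul_cancel_left₀ (ha _), Nat.cast_succ,
      neg_add_rev]

theorem norm_prod_range_le_pow {b : ℕ → 𝕜} {C : ℝ} {d : ℕ} (hb : ∀ v < d, ‖b v‖ ≤ C) :
    ‖∏ v ∈ Finset.range d, b v‖ ≤ C ^ d := by
  rw [norm_prod]
  simpa using Finset.prod_le_prod (fun v _ => norm_nonneg (b v))
    fun v hv => hb v (Finset.mem_range.1 hv)

variable {α : Type*} {L : Filter α} {s t : α → ℤ} {C : ℝ} {d : ℕ}

theorem potential_isBigO_of_norm_le (ha : ∀ j, a j ≠ 0) (hst : ∀ᶠ k in L, t k = s k + d)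
    (hC : ∀ᶠ k in L, ∀ m, s k ≤ m → m < t k → ‖a m‖ ≤ C) :
    (fun k => potential a (t k)) =O[L] fun k => potential a (s k) := by
  refine .of_bound (C ^ d) ?_
  filter_upwards [hst, hC] with k hk hkC
  rw [hk, potential_add_natCast ha, norm_mul]
  gcongr
  exact norm_prod_range_le_pow fun v hv => hkC _ (by lia) (by lia)

theorem potential_isBigO_of_norm_inv_le (ha : ∀ j, a j ≠ 0) (hst : ∀ᶠ k in L, t k = s k + d)
    (hC : ∀ᶠ k in L, ∀ m, s k ≤ m → m < t k → ‖(a m)⁻¹‖ ≤ C) :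
    (fun k => potential a (s k)) =O[L] fun k => potential a (t k) := by
  refine .of_bound (C ^ d) ?_
  filter_upwards [hst, hC] with k hk hkC
  have hprod : ∏ v ∈ Finset.range d, a (s k + v) ≠ 0 := Finset.prod_ne_zero_iff.2 fun _ _ => ha _
  rw [← inv_mul_cancel_left₀ hprod (potential a (s k)), ← potential_add_natCast ha, ← hk, norm_mul,
    ← Finset.prod_inv_distrib]
  gcongr
  exact norm_prod_range_le_pow fun v hv => hkC _ (by lia) (by lia)

end WeightProducts

section ShiftedPotential

variable {𝕜 : Type*} [NormedField 𝕜] {a : ℤ → 𝕜} {α : Type*} {L : Filter α} {n : α → ℕ}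
  {C : ℝ} {j : ℤ} {d l : ℕ}

theorem potential_one_add_isBigO (ha : ∀ j, a j ≠ 0) (n : α → ℕ) :
    (fun k => potential a (1 + n k)) =O[L] fun k => forwardProd a (n k) := by
  simp only [potential_one_add ha]
  exact (Asymptotics.isBigO_refl _ _).const_mul_left _

theorem potential_add_mul_isBigO_of_norm_le (ha : ∀ j, a j ≠ 0) (hC : ∀ j, ‖a j‖ ≤ C)
    (hl : 1 ≤ l) (hd : j.natAbs < d) :
    (fun k => potential a (j + l * (n k + d : ℕ))) =O[L] fun k => forwardProd a (l * n k) := by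
  have hld : (d : ℤ) ≤ l * d := le_mul_of_one_le_left (by positivity) (by exact_mod_cast hl)
  refine .trans (potential_isBigO_of_norm_le (d := (j + l * d - 1).toNat) ha
    (.of_forall fun k => ?_) (.of_forall fun k m _ _ => hC m)) (potential_one_add_isBigO ha _)
  rw [Int.toNat_of_nonneg (by lia)]
  push_cast
  ring

theorem potential_sub_mul_isBigO_of_norm_inv_le (ha : ∀ j, a j ≠ 0)
    (hC : ∀ j < 0, ‖(a j)⁻¹‖ ≤ C) (hl : 1 ≤ l) (hd : j.natAbs < d) :
    (fun k => potential a (j - l * (n k + d : ℕ))) =O[L] fun k => backwardProd a (l * n k) := by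
  have hld : (d : ℤ) ≤ l * d := le_mul_of_one_le_left (by positivity) (by exact_mod_cast hl)
  simp only [← potential_neg ha]
  refine potential_isBigO_of_norm_inv_le (d := (l * d - j).toNat) ha
    (.of_forall fun k => ?_) (.of_forall fun k m _ hm => hC m (by lia))
  rw [Int.toNat_of_nonneg (by lia)]
  push_cast
  ring

theorem potential_add_mul_isBigO_of_norm_inv_le (ha : ∀ j, a j ≠ 0)
    (hC : ∀ j > 0, ‖(a j)⁻¹‖ ≤ C) (hn : Tendsto n L atTop) (hl : 1 ≤ l) (hd : j.natAbs < d) :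
    (fun k => potential a (j + l * (n k - d : ℕ))) =O[L] fun k => forwardProd a (l * n k) := by
  have hld : (d : ℤ) ≤ l * d := le_mul_of_one_le_left (by positivity) (by exact_mod_cast hl)
  have hlarge : ∀ᶠ k in L, 2 * d ≤ n k := hn.eventually_ge_atTop _
  refine .trans (potential_isBigO_of_norm_inv_le (d := (1 + l * d - j).toNat) (C := C) ha ?_ ?_)
    (potential_one_add_isBigO ha _)
  · filter_upwards [hlarge] with k hk
    rw [Int.toNat_of_nonneg (by lia), Nat.cast_sub (by lia)]
    push_cast
    ring
  · filter_upwards [hlarge] with k hk m hm _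
    have hpos : ((n k - d : ℕ) : ℤ) ≤ l * (n k - d : ℕ) :=
      le_mul_of_one_le_left (by positivity) (by exact_mod_cast hl)
    exact hC m (by lia)

theorem potential_sub_mul_isBigO_of_norm_le (ha : ∀ j, a j ≠ 0) (hC : ∀ j, ‖a j‖ ≤ C)
    (hn : Tendsto n L atTop) (hl : 1 ≤ l) (hd : j.natAbs < d) :
    (fun k => potential a (j - l * (n k - d : ℕ))) =O[L] fun k => backwardProd a (l * n k) := by
  have hld : (d : ℤ) ≤ l * d := le_mul_of_one_le_left (by positivity) (by exact_mod_cast hl)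
  simp only [← potential_neg ha]
  refine potential_isBigO_of_norm_le (d := (j + l * d).toNat) ha ?_
    (.of_forall fun k m _ _ => hC m)
  filter_upwards [hn.eventually_ge_atTop d] with k hk
  rw [Int.toNat_of_nonneg (by lia), Nat.cast_sub hk]
  push_cast
  ring

theorem exists_potential_isBigO {ι : Type*} {a : ι → ℤ → 𝕜} (ha : ∀ i j, a i j ≠ 0)
    (hC : ∀ i, ∃ C, ∀ j, ‖a i j‖ ≤ C)
    (hinv : (∀ i, ∃ C, ∀ j < 0, ‖(a i j)⁻¹‖ ≤ C) ∨ ∀ i, ∃ C, ∀ j > 0, ‖(a i j)⁻¹‖ ≤ C)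
    (hn : Tendsto n L atTop) (S : Finset (ι × ℤ)) :
    ∃ n' : α → ℕ, ∀ s ∈ S, ∀ l : ℕ, 1 ≤ l →
      ((fun k => potential (a s.1) (s.2 + l * n' k)) =O[L]
        fun k => forwardProd (a s.1) (l * n k)) ∧
      ((fun k => potential (a s.1) (s.2 - l * n' k)) =O[L]
        fun k => backwardProd (a s.1) (l * n k)) := by
  choose C hC using hC
  obtain ⟨d, hd⟩ : ∃ d, ∀ s ∈ S, s.2.natAbs < d :=
    ⟨_, fun _ hs => Nat.lt_succ_of_le (Finset.le_sup (f := fun s => s.2.natAbs) hs)⟩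
  -- Longer times add weights on the right and inverse weights on the left; shorter times do the
  -- opposite.
  rcases hinv with hinv | hinv
  all_goals choose c hc using hinv
  · exact ⟨fun k => n k + d, fun s hs l hl =>
      ⟨potential_add_mul_isBigO_of_norm_le (ha _) (hC _) hl (hd s hs),
        potential_sub_mul_isBigO_of_norm_inv_le (ha _) (hc _) hl (hd s hs)⟩⟩
  · exact ⟨fun k => n k - d, fun s hs l hl =>
      ⟨potential_add_mul_isBigO_of_norm_inv_le (ha _) (hc _) hn hl (hd s hs),
        potential_sub_mul_isBigO_of_norm_le (ha _) (hC _) hn hl (hd s hs)⟩⟩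

end ShiftedPotential

section Scaling

variable {α : Type*} {L : Filter α}

theorem exists_pos_tendsto_mul_inv_mul {P Q : α → ℝ} (hP : ∀ k, 0 < P k) (hQ : ∀ k, 0 < Q k)
    (h : Tendsto (fun k => Q k * P k) L (𝓝 0)) :
    ∃ r : α → ℝ, (∀ k, 0 < r k) ∧ Tendsto (fun k => r k * P k) L (𝓝 0) ∧
      Tendsto (fun k => (r k)⁻¹ * Q k) L (𝓝 0) := by
  have hsqrt : Tendsto (fun k => √(Q k * P k)) L (𝓝 0) := by simpa using h.sqrt
  have sqrt_div_mul {x y : ℝ} (hx : 0 < x) : √(y / x) * x = √(y * x) := by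
    calc √(y / x) * x = √(y / x) * √(x * x) := by rw [Real.sqrt_mul_self hx.le]
      _ = √(y / x * (x * x)) := (Real.sqrt_mul' _ (mul_self_nonneg x)).symm
      _ = √(y * x) := by congr 1; field_simp
  refine ⟨fun k => √(Q k / P k), fun k => Real.sqrt_pos.2 (div_pos (hQ k) (hP k)),
    hsqrt.congr fun k => (sqrt_div_mul (hP k)).symm, hsqrt.congr fun k => ?_⟩
  rw [← Real.sqrt_inv, inv_div, sqrt_div_mul (hQ k), mul_comm]

theorem exists_pos_tendsto_mul_inv_mul_finset {κ : Type*} (S : Finset κ) {b c : κ → α → ℝ}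
    (hb : ∀ s k, 0 < b s k) (hc : ∀ s k, 0 < c s k)
    (h : ∀ s ∈ S, ∀ t ∈ S, Tendsto (fun k => c s k * b t k) L (𝓝 0)) :
    ∃ r : α → ℝ, (∀ k, 0 < r k) ∧ ∀ s ∈ S, Tendsto (fun k => r k * b s k) L (𝓝 0) ∧
      Tendsto (fun k => (r k)⁻¹ * c s k) L (𝓝 0) := by
  rcases S.eq_empty_or_nonempty with rfl | hS
  · exact ⟨fun _ => 1, fun _ => one_pos, by simp⟩
  have hsum : Tendsto (fun k => (∑ s ∈ S, c s k) * ∑ s ∈ S, b s k) L (𝓝 0) := by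
    simp only [Finset.sum_mul_sum]
    simpa using tendsto_finsetSum S fun s hs => tendsto_finsetSum S fun t ht => h s hs t ht
  obtain ⟨r, hr, hrb, hrc⟩ := exists_pos_tendsto_mul_inv_mul
    (fun k => Finset.sum_pos (fun s _ => hb s k) hS)
    (fun k => Finset.sum_pos (fun s _ => hc s k) hS) hsum
  refine ⟨r, hr, fun s hs => ⟨?_, ?_⟩⟩
  · refine squeeze_zero (fun k => (mul_pos (hr k) (hb s k)).le) (fun k => ?_) hrb
    exact mul_le_mul_of_nonneg_left
      (Finset.single_le_sum (f := (b · k)) (fun s _ => (hb s k).le) hs) (hr k).le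
  · refine squeeze_zero (fun k => (mul_pos (inv_pos.2 (hr k)) (hc s k)).le) (fun k => ?_) hrc
    exact mul_le_mul_of_nonneg_left
      (Finset.single_le_sum (f := (c · k)) (fun s _ => (hc s k).le) hs) (inv_pos.2 (hr k)).le

end Scaling

section WeightCriterion

variable {𝕜 ι : Type*} [NormedField 𝕜] {a : ι → ℤ → 𝕜} {N : ℕ}

/-- Condition (2) of the theorem on a sequence `n`, for the weights `a i j`. -/
def WeightCriterion (a : ι → ℤ → 𝕜) (N : ℕ) (n : ℕ → ℕ) : Prop :=
  (∀ i₁ i₂ : ι, ∀ l : ℕ, 1 ≤ l → l ≤ N →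
    Tendsto (fun k => ‖backwardProd (a i₁) (l * n k)‖ * ‖forwardProd (a i₂) (N * n k)‖)
      atTop (𝓝 0) ∧
    Tendsto (fun k => ‖backwardProd (a i₁) (N * n k)‖ * ‖forwardProd (a i₂) (l * n k)‖)
      atTop (𝓝 0)) ∧
  ∀ i : ι, ∀ l : ℕ, 1 ≤ l → l ≤ N - 1 →
    Tendsto (fun k => ‖backwardProd (a i) (l * n k)‖) atTop (𝓝 0) ∧
    Tendsto (fun k => ‖forwardProd (a i) (l * n k)‖) atTop (𝓝 0)

theorem WeightCriterion.tendsto_mul {n : ℕ → ℕ} (h : WeightCriterion a N n) (i₁ i₂ : ι)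
    {l₁ l₂ : ℕ} (hl₁ : l₁ ∈ Finset.Icc 1 N) (hl₂ : l₂ ∈ Finset.Icc 1 N) :
    Tendsto (fun k => ‖backwardProd (a i₁) (l₁ * n k)‖ * ‖forwardProd (a i₂) (l₂ * n k)‖)
      atTop (𝓝 0) := by
  rw [Finset.mem_Icc] at hl₁ hl₂
  rcases hl₁.2.eq_or_lt with rfl | hlt₁
  · exact (h.1 i₁ i₂ l₂ hl₂.1 hl₂.2).2
  rcases hl₂.2.eq_or_lt with rfl | hlt₂
  · exact (h.1 i₁ i₂ l₁ hl₁.1 hl₁.2).1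
  · simpa using (h.2 i₁ l₁ hl₁.1 (by lia)).1.mul (h.2 i₂ l₂ hl₂.1 (by lia)).2

/-- The weight products occurring in `WeightCriterion` are at most `ε` at the single time `n`, for
the indices in `F`. -/
structure WeightsLE (a : ι → ℤ → 𝕜) (N : ℕ) (F : Finset ι) (ε : ℝ) (n : ℕ) : Prop where
  mul_le : ∀ i₁ ∈ F, ∀ i₂ ∈ F, ∀ l₁ l₂ : ℕ, 1 ≤ l₁ → l₁ ≤ N → 1 ≤ l₂ → l₂ ≤ N →
    ‖backwardProd (a i₁) (l₁ * n)‖ * ‖forwardProd (a i₂) (l₂ * n)‖ ≤ ε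
  backward_le : ∀ i ∈ F, ∀ l : ℕ, 1 ≤ l → l ≤ N - 1 → ‖backwardProd (a i) (l * n)‖ ≤ ε
  forward_le : ∀ i ∈ F, ∀ l : ℕ, 1 ≤ l → l ≤ N - 1 → ‖forwardProd (a i) (l * n)‖ ≤ ε

theorem WeightsLE.mono {F : Finset ι} {ε ε' : ℝ} {n : ℕ} (h : WeightsLE a N F ε n) (hε : ε ≤ ε') :
    WeightsLE a N F ε' n where
  mul_le i₁ h₁ i₂ h₂ l₁ l₂ hl₁ hl₁' hl₂ hl₂' :=
    (h.mul_le i₁ h₁ i₂ h₂ l₁ l₂ hl₁ hl₁' hl₂ hl₂').trans hε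
  backward_le i hi l hl hl' := (h.backward_le i hi l hl hl').trans hε
  forward_le i hi l hl hl' := (h.forward_le i hi l hl hl').trans hε

theorem frequently_weightsLE (ha : ∀ i j, a i j ≠ 0) (hN : 2 ≤ N) {F : Finset ι}
    (hF : F.Nonempty) (h : ∀ ε > 0, ∃ n, 1 ≤ n ∧ WeightsLE a N F ε n) {ε : ℝ} (hε : 0 < ε) :
    ∃ᶠ n in atTop, 1 ≤ n ∧ WeightsLE a N F ε n := by
  obtain ⟨i, hi⟩ := hF
  refine frequently_atTop.2 fun M => ?_
  -- A bound below all `‖forwardProd (a i) m‖`, `m < M`, rules out every time before `M`.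
  have hsmall : ∀ᶠ δ : ℝ in 𝓝[>] 0, ∀ m ∈ Finset.range M, δ < ‖forwardProd (a i) m‖ :=
    (eventually_all_finset _).2 fun m _ => nhdsWithin_le_nhds
      (Iio_mem_nhds (norm_pos_iff.2 (forwardProd_ne_zero (ha i) m)))
  obtain ⟨δ, hδM, hδ, hδε⟩ := (hsmall.and (Ioc_mem_nhdsGT hε)).exists
  obtain ⟨n, hn, hle⟩ := h δ hδ
  refine ⟨n, ?_, hn, hle.mono hδε⟩
  by_contra! hnM
  refine (hδM n (Finset.mem_range.2 hnM)).not_ge ?_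
  simpa using hle.forward_le i hi 1 le_rfl (by lia)

theorem weightCriterion_of_weightsLE {F : ℕ → Finset ι} (hF : ∀ i, ∀ᶠ k in atTop, i ∈ F k)
    {n : ℕ → ℕ} {ε : ℕ → ℝ} (hε : Tendsto ε atTop (𝓝 0))
    (h : ∀ k, WeightsLE a N (F k) (ε k) (n k)) : WeightCriterion a N n := by
  have tendsto_mul (i₁ i₂ : ι) {l₁ l₂ : ℕ} (hl₁ : 1 ≤ l₁) (hl₁' : l₁ ≤ N) (hl₂ : 1 ≤ l₂)
      (hl₂' : l₂ ≤ N) : Tendsto (fun k =>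
        ‖backwardProd (a i₁) (l₁ * n k)‖ * ‖forwardProd (a i₂) (l₂ * n k)‖) atTop (𝓝 0) := by
    refine squeeze_zero' (.of_forall fun k => by positivity) ?_ hε
    filter_upwards [hF i₁, hF i₂] with k h₁ h₂
    exact (h k).mul_le i₁ h₁ i₂ h₂ l₁ l₂ hl₁ hl₁' hl₂ hl₂'
  refine ⟨fun i₁ i₂ l hl hl' => ⟨tendsto_mul i₁ i₂ hl hl' (hl.trans hl') le_rfl,
    tendsto_mul i₁ i₂ (hl.trans hl') le_rfl hl hl'⟩, fun i l hl hl' => ⟨?_, ?_⟩⟩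
  · refine squeeze_zero' (.of_forall fun k => norm_nonneg _) ?_ hε
    filter_upwards [hF i] with k hi using (h k).backward_le i hi l hl hl'
  · refine squeeze_zero' (.of_forall fun k => norm_nonneg _) ?_ hε
    filter_upwards [hF i] with k hi using (h k).forward_le i hi l hl hl'

theorem exists_strictMono_weightCriterion [Countable ι] [Nonempty ι] (ha : ∀ i j, a i j ≠ 0)
    (hN : 2 ≤ N) (h : ∀ F : Finset ι, F.Nonempty → ∀ ε > 0, ∃ n, 1 ≤ n ∧ WeightsLE a N F ε n) :
    ∃ n : ℕ → ℕ, StrictMono n ∧ (∀ k, 1 ≤ n k) ∧ WeightCriterion a N n := by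
  classical
  obtain ⟨g, hg⟩ := exists_surjective_nat ι
  let F : ℕ → Finset ι := fun k => (Finset.range (k + 1)).image g
  have hF : ∀ i, ∀ᶠ k in atTop, i ∈ F k := fun i => by
    obtain ⟨m, rfl⟩ := hg i
    filter_upwards [eventually_ge_atTop m] with k hk
    exact Finset.mem_image_of_mem g (Finset.mem_range.2 (by lia))
  obtain ⟨n, hn, hnF⟩ := extraction_forall_of_frequently fun k =>
    frequently_weightsLE ha hN (by simp [F] : (F k).Nonempty) (h (F k) (by simp [F]))
      (Nat.one_div_pos_of_nat (α := ℝ) (n := k))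
  exact ⟨n, hn, fun k => (hnF k).1, weightCriterion_of_weightsLE hF
    tendsto_one_div_add_atTop_nhds_zero_nat fun k => (hnF k).2⟩

end WeightCriterion

section Scalars

variable {𝕜 ι : Type*} [RCLike 𝕜] {a : ι → ℤ → 𝕜} {N : ℕ}

theorem WeightCriterion.exists_scalars (ha : ∀ i j, a i j ≠ 0) {n : ℕ → ℕ}
    (h : WeightCriterion a N n) (F : Finset ι) :
    ∃ c : ℕ → 𝕜, (∀ k, c k ≠ 0) ∧ ∀ i ∈ F, ∀ l ∈ Finset.Icc 1 N,
      Tendsto (fun k => c k • forwardProd (a i) (l * n k)) atTop (𝓝 0) ∧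
      Tendsto (fun k => (c k)⁻¹ • backwardProd (a i) (l * n k)) atTop (𝓝 0) := by
  obtain ⟨r, hr, hrS⟩ := exists_pos_tendsto_mul_inv_mul_finset (F ×ˢ Finset.Icc 1 N)
    (b := fun s k => ‖forwardProd (a s.1) (s.2 * n k)‖)
    (c := fun s k => ‖backwardProd (a s.1) (s.2 * n k)‖)
    (fun s k => norm_pos_iff.2 (forwardProd_ne_zero (ha _) _))
    (fun s k => norm_pos_iff.2 (backwardProd_ne_zero (ha _) _))
    fun s hs t ht => h.tendsto_mul s.1 t.1 (Finset.mem_product.1 hs).2 (Finset.mem_product.1 ht).2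
  refine ⟨fun k => (r k : 𝕜), fun k => RCLike.ofReal_ne_zero.2 (hr k).ne', fun i hi l hl => ?_⟩
  obtain ⟨hforw, hback⟩ := hrS (i, l) (Finset.mk_mem_product hi hl)
  constructor <;> rw [tendsto_zero_iff_norm_tendsto_zero]
  · simpa [abs_of_pos (hr _)] using hforw
  · simpa [abs_of_pos (hr _)] using hback

end Scalars

/-- `T` acts on the vectors `e (i, j)` as a family, indexed by `i`, of bilateral forward weighted
shifts with weights `a i j`; the `E (i, j)` are the coordinate functionals. For an operator weighted
shift on `ℓ²(ℤ, K)`, `e (i, j)` is the vector `f i` placed at position `j`. -/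
structure IsBilateralShift {𝕜 X ι : Type*} [NontriviallyNormedField 𝕜] [NormedAddCommGroup X]
    [NormedSpace 𝕜 X] (T : X →L[𝕜] X) (a : ι → ℤ → 𝕜) (e : ι × ℤ → X)
    (E : ι × ℤ → StrongDual 𝕜 X) : Prop where
  weight_ne_zero : ∀ i j, a i j ≠ 0
  map_basis : ∀ i j, T (e (i, j)) = a i j • e (i, j + 1)
  coord_self : ∀ s, E s (e s) = 1
  coord_of_ne : ∀ s t, s ≠ t → E s (e t) = 0
  norm_basis_le : ∀ i, ∃ C, ∀ j, ‖e (i, j)‖ ≤ C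
  norm_coord_le : ∀ i, ∃ C, ∀ j, ‖E (i, j)‖ ≤ C
  dense_span : Dense (Submodule.span 𝕜 (Set.range e) : Set X)

namespace IsBilateralShift

section Coordinates

variable {𝕜 X ι : Type*} [NontriviallyNormedField 𝕜] [NormedAddCommGroup X] [NormedSpace 𝕜 X]
  {T : X →L[𝕜] X} {a : ι → ℤ → 𝕜} {e : ι × ℤ → X} {E : ι × ℤ → StrongDual 𝕜 X}

theorem norm_weight_le (h : IsBilateralShift T a e E) (i : ι) : ∃ C, ∀ j, ‖a i j‖ ≤ C := by
  obtain ⟨C, hC⟩ := h.norm_basis_le i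
  obtain ⟨M, hM⟩ := h.norm_coord_le i
  refine ⟨M * (‖T‖ * C), fun j => ?_⟩
  calc ‖a i j‖ = ‖E (i, j + 1) (T (e (i, j)))‖ := by simp [h.map_basis, h.coord_self]
    _ ≤ M * (‖T‖ * C) := (E (i, j + 1)).le_of_opNorm_le_of_le (hM _) (T.le_opNorm_of_le (hC j))

theorem coord_map (h : IsBilateralShift T a e E) (i : ι) (j : ℤ) (x : X) :
    E (i, j + 1) (T x) = a i j * E (i, j) x := by
  suffices (E (i, j + 1)).comp T = a i j • E (i, j) from DFunLike.congr_fun this x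
  refine ContinuousLinearMap.ext_on h.dense_span ?_
  rintro _ ⟨⟨i', j'⟩, rfl⟩
  by_cases hij : (i, j) = (i', j')
  · obtain ⟨rfl, rfl⟩ := Prod.mk.inj hij
    simp [h.map_basis, h.coord_self]
  · have hij' : (i, j + 1) ≠ (i', j' + 1) := by simpa using hij
    simp [h.map_basis, h.coord_of_ne _ _ hij, h.coord_of_ne _ _ hij']

theorem coord_one_add_pow (h : IsBilateralShift T a e E) (i : ι) (m : ℕ) (x : X) :
    E (i, 1 + m) ((T ^ m) x) = forwardProd (a i) m * E (i, 1) x := by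
  induction m with
  | zero => simp [forwardProd]
  | succ m ih =>
    rw [pow_succ', mul_apply_eq_comp, Nat.cast_succ, ← add_assoc, h.coord_map, ih,
      forwardProd_succ, mul_assoc]

theorem backwardProd_mul_coord_zero_pow (h : IsBilateralShift T a e E) (i : ι) (m : ℕ) (x : X) :
    backwardProd (a i) m * E (i, 0) ((T ^ m) x) = E (i, -m) x := by
  induction m generalizing x with
  | zero => simp [backwardProd]
  | succ m ih =>
    rw [pow_succ, mul_apply_eq_comp, backwardProd_succ, mul_assoc, ih, Nat.cast_succ,
      show (-m : ℤ) = -(m + 1) + 1 by ring, h.coord_map,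
      inv_mul_cancel_left₀ (h.weight_ne_zero _ _)]

/-- The sum of the basis vectors at positions `0` and `1` over the indices in `F`. -/
def bump (e : ι × ℤ → X) (F : Finset ι) : X := ∑ i ∈ F, (e (i, 0) + e (i, 1))

theorem coord_bump (h : IsBilateralShift T a e E) {F : Finset ι} {i : ι}
    (hi : i ∈ F) (j : ℤ) : E (i, j) (bump e F) = if j = 0 ∨ j = 1 then 1 else 0 := by
  classical
  rw [bump, map_sum, Finset.sum_eq_single_of_mem i hi fun i' _ hne => ?_]
  · by_cases h₀ : j = 0
    · subst h₀
      simp [h.coord_self, h.coord_of_ne (i, 0) (i, 1)]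
    by_cases h₁ : j = 1
    · subst h₁
      simp [h.coord_self, h.coord_of_ne (i, 1) (i, 0)]
    · simp [h₀, h₁, h.coord_of_ne (i, j) (i, 0), h.coord_of_ne (i, j) (i, 1)]
  · have hcoord (j' : ℤ) : E (i, j) (e (i', j')) = 0 :=
      h.coord_of_ne _ _ fun heq => hne (congrArg Prod.fst heq).symm
    rw [map_add, hcoord, hcoord, add_zero]

/-- On the indices in `F`, the coordinates of `x` are at least `1 / 2` at positions `0` and `1`, and
at most `δ` elsewhere. -/
structure IsNearBump (E : ι × ℤ → StrongDual 𝕜 X) (F : Finset ι) (δ : ℝ) (x : X) : Prop where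
  half_le_zero : ∀ i ∈ F, 1 / 2 ≤ ‖E (i, 0) x‖
  half_le_one : ∀ i ∈ F, 1 / 2 ≤ ‖E (i, 1) x‖
  norm_le : ∀ i ∈ F, ∀ j, j ≠ 0 → j ≠ 1 → ‖E (i, j) x‖ ≤ δ

theorem isNearBump_of_norm_coord_sub_le (h : IsBilateralShift T a e E) {F : Finset ι} {δ : ℝ}
    (hδ : δ ≤ 1 / 2) {c : 𝕜} (hc : 1 ≤ ‖c‖) {x : X}
    (hx : ∀ i ∈ F, ∀ j, ‖E (i, j) (x - c • bump e F)‖ ≤ δ) : IsNearBump E F δ x := by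
  classical
  have half_le (i : ι) (hi : i ∈ F) (j : ℤ) (hj : j = 0 ∨ j = 1) : 1 / 2 ≤ ‖E (i, j) x‖ := by
    have hclose := hx i hi j
    rw [map_sub, map_smul, h.coord_bump hi, if_pos hj, smul_eq_mul, mul_one, norm_sub_rev]
      at hclose
    linarith [norm_sub_norm_le c (E (i, j) x)]
  refine ⟨fun i hi => half_le i hi 0 (.inl rfl), fun i hi => half_le i hi 1 (.inr rfl),
    fun i hi j h₀ h₁ => ?_⟩
  simpa [h.coord_bump hi, h₀, h₁] using hx i hi j

theorem norm_mul_forwardProd_le (h : IsBilateralShift T a e E) {F : Finset ι} {δ : ℝ} {c : 𝕜}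
    {x : X} {m : ℕ} (hm : 1 ≤ m) (hx : IsNearBump E F δ x)
    (hTx : IsNearBump E F δ (c • (T ^ m) x)) {i : ι} (hi : i ∈ F) :
    ‖c‖ * ‖forwardProd (a i) m‖ ≤ 2 * δ := by
  have hsmall := hTx.norm_le i hi (1 + m) (by lia) (by lia)
  rw [map_smul, h.coord_one_add_pow, smul_eq_mul, norm_mul, norm_mul, ← mul_assoc] at hsmall
  have hlarge := mul_le_mul_of_nonneg_left (hx.half_le_one i hi)
    (by positivity : 0 ≤ ‖c‖ * ‖forwardProd (a i) m‖)
  linarith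

theorem norm_backwardProd_le (h : IsBilateralShift T a e E) {F : Finset ι} {δ : ℝ} {c : 𝕜}
    {x : X} {m : ℕ} (hm : 1 ≤ m) (hx : IsNearBump E F δ x)
    (hTx : IsNearBump E F δ (c • (T ^ m) x)) {i : ι} (hi : i ∈ F) :
    ‖backwardProd (a i) m‖ ≤ 2 * δ * ‖c‖ := by
  have hcoord : ‖backwardProd (a i) m‖ * ‖E (i, 0) (c • (T ^ m) x)‖ = ‖c‖ * ‖E (i, -m) x‖ := by
    rw [map_smul, smul_eq_mul, norm_mul, mul_left_comm, ← norm_mul (backwardProd _ _),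
      h.backwardProd_mul_coord_zero_pow]
  have hlarge := mul_le_mul_of_nonneg_left (hTx.half_le_zero i hi)
    (norm_nonneg (backwardProd (a i) m))
  have hsmall := mul_le_mul_of_nonneg_left (hx.norm_le i hi (-m) (by lia) (by lia))
    (norm_nonneg c)
  linarith

theorem weightsLE_of_isNearBump (h : IsBilateralShift T a e E) {F : Finset ι} {δ : ℝ}
    (hδ₀ : 0 ≤ δ) (hδ : δ ≤ 1 / 2) {c : 𝕜} {x : X} {n N : ℕ} (hn : 1 ≤ n)
    (hx : IsNearBump E F δ x)
    (hTx : ∀ l, 1 ≤ l → l ≤ N → IsNearBump E F δ (c • (T ^ (l * n)) x)) :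
    WeightsLE a N F (2 * δ) n := by
  -- `T ^ (l * n)` maps the near-bump `c • (T ^ n) x` to the near-bump `c • (T ^ ((l + 1) * n)) x`.
  have hTx' (l : ℕ) (hl : l ≤ N - 1) (hl₁ : 1 ≤ l) :
      IsNearBump E F δ ((1 : 𝕜) • (T ^ (l * n)) (c • (T ^ (1 * n)) x)) := by
    rw [one_smul, map_smul, ← mul_apply_eq_comp, ← pow_add, ← add_mul]
    exact hTx (l + 1) (by lia) (by lia)
  refine ⟨fun i₁ hi₁ i₂ hi₂ l₁ l₂ hl₁ hl₁' hl₂ hl₂' => ?_, fun i hi l hl hl' => ?_,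
    fun i hi l hl hl' => ?_⟩
  · have hback := h.norm_backwardProd_le (Nat.mul_pos hl₁ hn) hx (hTx l₁ hl₁ hl₁') hi₁
    have hforw := h.norm_mul_forwardProd_le (Nat.mul_pos hl₂ hn) hx (hTx l₂ hl₂ hl₂') hi₂
    calc ‖backwardProd (a i₁) (l₁ * n)‖ * ‖forwardProd (a i₂) (l₂ * n)‖
        ≤ 2 * δ * ‖c‖ * ‖forwardProd (a i₂) (l₂ * n)‖ := by gcongr
      _ ≤ 2 * δ * (2 * δ) := by rw [mul_assoc (2 * δ)]; gcongr
      _ ≤ 2 * δ := mul_le_of_le_one_right (by linarith) (by linarith)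
  · simpa using h.norm_backwardProd_le (Nat.mul_pos hl hn) (hTx 1 le_rfl (by lia))
      (hTx' l hl' hl) hi
  · simpa using h.norm_mul_forwardProd_le (Nat.mul_pos hl hn) (hTx 1 le_rfl (by lia))
      (hTx' l hl' hl) hi

theorem norm_coord_le_finset (h : IsBilateralShift T a e E) (F : Finset ι) :
    ∃ M > 0, ∀ i ∈ F, ∀ j, ‖E (i, j)‖ ≤ M := by
  classical
  choose C hC using h.norm_coord_le
  obtain ⟨M, hM⟩ := (F.image C).exists_le
  exact ⟨max M 1, by positivity, fun i hi j =>
    ((hC i j).trans (hM _ (Finset.mem_image_of_mem C hi))).trans (le_max_left M 1)⟩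

end Coordinates

section Necessity

variable {𝕜 X ι : Type*} [RCLike 𝕜] [NormedAddCommGroup X] [NormedSpace 𝕜 X]
  {T : X →L[𝕜] X} {a : ι → ℤ → 𝕜} {e : ι × ℤ → X} {E : ι × ℤ → StrongDual 𝕜 X} {N : ℕ}

theorem exists_isNearBump (h : IsBilateralShift T a e E) (hN : 2 ≤ N)
    (hd : Dense (dSupercyclicVectors fun l : Fin N => T ^ (l + 1 : ℕ))) {F : Finset ι}
    (hF : F.Nonempty) {δ : ℝ} (hδ₀ : 0 < δ) (hδ : δ < 1 / 2) :
    ∃ (x : X) (c : 𝕜) (n : ℕ), 1 ≤ n ∧ IsNearBump E F δ x ∧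
      ∀ l, 1 ≤ l → l ≤ N → IsNearBump E F δ (c • (T ^ (l * n)) x) := by
  classical
  obtain ⟨M, hM₀, hM⟩ := h.norm_coord_le_finset F
  have coord_le {v : X} (hv : ‖v‖ < δ / M) (i : ι) (hi : i ∈ F) (j : ℤ) : ‖E (i, j) v‖ ≤ δ := by
    simpa [mul_div_cancel₀ _ hM₀.ne'] using (E (i, j)).le_of_opNorm_le_of_le (hM i hi j) hv.le
  -- The multiples `(l + 1) • bump e F` are pairwise different targets, which excludes `n = 0`.
  obtain ⟨x, hx, hxd⟩ := Metric.dense_iff.1 hd (bump e F) (δ / M) (by positivity)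
  obtain ⟨_, hz, ⟨c, n⟩, rfl⟩ := Metric.dense_iff.1 hxd
    (fun l : Fin N => ((l + 1 : ℕ) : 𝕜) • bump e F) (δ / M) (by positivity)
  rw [mem_ball_iff_norm] at hx hz
  have horbit (l : ℕ) (hl : 1 ≤ l) (hl' : l ≤ N) :
      ‖c • (T ^ (l * n)) x - (l : 𝕜) • bump e F‖ < δ / M := by
    obtain ⟨m, rfl⟩ : ∃ m, l = m + 1 := ⟨l - 1, by lia⟩
    simpa only [Pi.sub_apply, ← pow_mul] using
      (norm_le_pi_norm _ (⟨m, by lia⟩ : Fin N)).trans_lt hz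
  refine ⟨x, c, n, Nat.one_le_iff_ne_zero.2 ?_, ?_, fun l hl hl' => ?_⟩
  · rintro rfl
    obtain ⟨i, hi⟩ := hF
    have h₁ : ‖c * E (i, 0) x - 1‖ ≤ δ := by
      simpa [h.coord_bump hi] using coord_le (horbit 1 le_rfl (by lia)) i hi 0
    have h₂ : ‖c * E (i, 0) x - 2‖ ≤ δ := by
      simpa [h.coord_bump hi] using coord_le (horbit 2 (by lia) hN) i hi 0
    have hdist : (1 : ℝ) ≤ ‖1 - c * E (i, 0) x‖ + ‖c * E (i, 0) x - 2‖ := by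
      simpa [show (1 - 2 : 𝕜) = -1 by norm_num] using
        norm_sub_le_norm_sub_add_norm_sub (1 : 𝕜) (c * E (i, 0) x) 2
    rw [norm_sub_rev] at hdist
    linarith
  · exact h.isNearBump_of_norm_coord_sub_le (c := 1) hδ.le (by simp)
      (coord_le (by simpa using hx))
  · exact h.isNearBump_of_norm_coord_sub_le (c := (l : 𝕜)) hδ.le (by simpa using hl)
      (coord_le (horbit l hl hl'))

theorem exists_weightCriterion [Countable ι] [Nonempty ι] (h : IsBilateralShift T a e E)
    (hN : 2 ≤ N) (hd : Dense (dSupercyclicVectors fun l : Fin N => T ^ (l + 1 : ℕ))) :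
    ∃ n : ℕ → ℕ, StrictMono n ∧ (∀ k, 1 ≤ n k) ∧ WeightCriterion a N n := by
  refine exists_strictMono_weightCriterion h.weight_ne_zero hN fun F hF ε hε => ?_
  obtain ⟨δ, hδ₀, hδ⟩ := exists_between (lt_min (half_pos hε) one_half_pos)
  obtain ⟨hδε, hδ⟩ := lt_min_iff.1 hδ
  obtain ⟨x, c, n, hn, hx, hTx⟩ := h.exists_isNearBump hN hd hF hδ₀ hδ
  exact ⟨n, hn, (h.weightsLE_of_isNearBump hδ₀.le hδ.le hn hx hTx).mono (by linarith)⟩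

end Necessity

end IsBilateralShift

section Chain

variable {𝕜 X ι : Type*} [NontriviallyNormedField 𝕜] [NormedAddCommGroup X] [NormedSpace 𝕜 X]
  {T : X →L[𝕜] X} {u : ι × ℤ → X}

/-- The combination of the vectors `u` with coefficients `c`, each vector moved by `t` positions.
If `T` moves each `u (i, j)` to `u (i, j + 1)`, this is `T ^ t` applied to `∑ c s • u s`, also for
negative `t`. -/
noncomputable def shiftedSum (u : ι × ℤ → X) (t : ℤ) (c : ι × ℤ →₀ 𝕜) : X :=
  Finsupp.linearCombination 𝕜 (fun s => u (s.1, s.2 + t)) c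

theorem pow_apply_chain (hu : ∀ i j, T (u (i, j)) = u (i, j + 1)) (m : ℕ) (i : ι) (j : ℤ) :
    (T ^ m) (u (i, j)) = u (i, j + m) := by
  induction m with
  | zero => simp
  | succ m ih => rw [pow_succ', mul_apply_eq_comp, ih, hu, Nat.cast_succ, add_assoc]

theorem pow_shiftedSum (hu : ∀ i j, T (u (i, j)) = u (i, j + 1)) (m : ℕ) (t : ℤ)
    (c : ι × ℤ →₀ 𝕜) : (T ^ m) (shiftedSum u t c) = shiftedSum u (t + m) c := by
  simp only [shiftedSum, Finsupp.linearCombination_apply, Finsupp.sum, map_sum, map_smul,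
    pow_apply_chain hu, add_assoc]

theorem tendsto_smul_shiftedSum {α : Type*} {L : Filter α} {r : α → 𝕜} {t : α → ℤ}
    {c : ι × ℤ →₀ 𝕜}
    (h : ∀ s ∈ c.support, Tendsto (fun k => r k • u (s.1, s.2 + t k)) L (𝓝 0)) :
    Tendsto (fun k => r k • shiftedSum u (t k) c) L (𝓝 0) := by
  simp only [shiftedSum, Finsupp.linearCombination_apply, Finsupp.sum, Finset.smul_sum,
    smul_comm (r _) (c _)]
  simpa using tendsto_finsetSum c.support fun s hs => (h s hs).const_smul (c s)

theorem mem_span_range_iff_shiftedSum {x : X} :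
    x ∈ Submodule.span 𝕜 (Set.range u) ↔ ∃ c : ι × ℤ →₀ 𝕜, shiftedSum u 0 c = x := by
  simp [shiftedSum, Finsupp.mem_span_range_iff_exists_finsupp, Finsupp.linearCombination_apply]

theorem separableSpace_of_dense_span [TopologicalSpace.SeparableSpace 𝕜] {s : Set X}
    (hs : s.Countable) (h : Dense (Submodule.span 𝕜 s : Set X)) :
    TopologicalSpace.SeparableSpace X := by
  rw [← TopologicalSpace.isSeparable_univ_iff, ← h.closure_eq]
  exact hs.isSeparable.span.closure

theorem tendsto_pow_shiftedSum_neg {α : Type*} {L : Filter α} {n : α → ℕ} {N : ℕ}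
    {c : ι × ℤ →₀ 𝕜} (hu : ∀ i j, T (u (i, j)) = u (i, j + 1))
    (h : ∀ s ∈ c.support, ∀ l : ℕ, 1 ≤ l → l ≤ N - 1 →
      Tendsto (fun k => u (s.1, s.2 + l * n k)) L (𝓝 0) ∧
      Tendsto (fun k => u (s.1, s.2 - l * n k)) L (𝓝 0))
    {l l' : ℕ} (hl : l < N) (hl' : l' < N) (hne : l ≠ l') :
    Tendsto (fun k => (T ^ ((l + 1) * n k)) (shiftedSum u (-((l' + 1 : ℕ) * n k)) c)) L (𝓝 0) := by
  suffices ∀ s ∈ c.support,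
      Tendsto (fun k => u (s.1, s.2 + (-((l' + 1 : ℕ) * n k) + ((l + 1) * n k : ℕ)))) L (𝓝 0) by
    simp only [pow_shiftedSum hu]
    simpa using tendsto_smul_shiftedSum (r := fun _ => (1 : 𝕜)) fun s hs => by
      simpa using this s hs
  intro s hs
  rcases lt_or_gt_of_ne hne with hlt | hlt
  · refine (h s hs (l' - l) (by lia) (by lia)).2.congr fun k => ?_
    push_cast [hlt.le]
    ring_nf
  · refine (h s hs (l - l') (by lia) (by lia)).1.congr fun k => ?_
    push_cast [hlt.le]
    ring_nf

theorem dense_dSupercyclicVectors_of_chain [Countable ι] [TopologicalSpace.SeparableSpace 𝕜]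
    [CompleteSpace X] {N : ℕ} (hdense : Dense (Submodule.span 𝕜 (Set.range u) : Set X))
    (hu : ∀ i j, T (u (i, j)) = u (i, j + 1))
    (h : ∀ S : Finset (ι × ℤ), ∃ (n : ℕ → ℕ) (c : ℕ → 𝕜), (∀ k, c k ≠ 0) ∧ ∀ s ∈ S,
      (∀ l : ℕ, 1 ≤ l → l ≤ N →
        Tendsto (fun k => c k • u (s.1, s.2 + l * n k)) atTop (𝓝 0) ∧
        Tendsto (fun k => (c k)⁻¹ • u (s.1, s.2 - l * n k)) atTop (𝓝 0)) ∧
      ∀ l : ℕ, 1 ≤ l → l ≤ N - 1 →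
        Tendsto (fun k => u (s.1, s.2 + l * n k)) atTop (𝓝 0) ∧
        Tendsto (fun k => u (s.1, s.2 - l * n k)) atTop (𝓝 0)) :
    Dense (dSupercyclicVectors fun l : Fin N => T ^ (l + 1 : ℕ)) := by
  classical
  have := separableSpace_of_dense_span (Set.countable_range u) hdense
  refine dense_dSupercyclicVectors_of_tendsto hdense fun x hx y hy => ?_
  obtain ⟨b, rfl⟩ := mem_span_range_iff_shiftedSum.1 hx
  choose g hg using fun l => mem_span_range_iff_shiftedSum.1 (hy l)
  obtain ⟨S, hbS, hgS⟩ : ∃ S, b.support ⊆ S ∧ ∀ l, (g l).support ⊆ S :=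
    ⟨b.support ∪ Finset.univ.biUnion fun l => (g l).support, Finset.subset_union_left, fun l =>
      (Finset.subset_biUnion_of_mem (fun l => (g l).support) (Finset.mem_univ l)).trans
        Finset.subset_union_right⟩
  obtain ⟨n, c, hc, hS⟩ := h S
  -- The approximate preimage of `y l` is its exact preimage under `T ^ ((l + 1) * n k)`.
  refine ⟨n, c, fun l k => shiftedSum u (-((l + 1 : ℕ) * n k)) (g l), hc, fun l => ?_,
    fun l => ?_, fun l l' => ?_⟩
  · simp only [← pow_mul, pow_shiftedSum hu, zero_add, Nat.cast_mul]
    exact tendsto_smul_shiftedSum fun s hs => ((hS s (hbS hs)).1 _ (by lia) (by lia)).1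
  · exact tendsto_smul_shiftedSum fun s hs => ((hS s (hgS l hs)).1 _ (by lia) (by lia)).2
  simp only [← pow_mul]
  rcases eq_or_ne l' l with rfl | hne
  · simp [pow_shiftedSum hu, hg]
  · rw [if_neg hne]
    exact tendsto_pow_shiftedSum_neg hu (fun s hs => (hS s (hgS l' hs)).2) l.2 l'.2
      fun heq => hne (Fin.ext heq.symm)

end Chain

namespace IsBilateralShift

section Chain

variable {𝕜 X ι : Type*} [NontriviallyNormedField 𝕜] [NormedAddCommGroup X] [NormedSpace 𝕜 X]
  {T : X →L[𝕜] X} {a : ι → ℤ → 𝕜} {e : ι × ℤ → X} {E : ι × ℤ → StrongDual 𝕜 X}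

/-- The basis vectors rescaled so that all weights of the shift become `1`. -/
noncomputable def chain (a : ι → ℤ → 𝕜) (e : ι × ℤ → X) (s : ι × ℤ) : X :=
  potential (a s.1) s.2 • e s

theorem map_chain (h : IsBilateralShift T a e E) (i : ι) (j : ℤ) :
    T (chain a e (i, j)) = chain a e (i, j + 1) := by
  rw [chain, map_smul, h.map_basis, smul_smul, mul_comm, chain,
    potential_add_one (h.weight_ne_zero i)]

theorem dense_span_chain (h : IsBilateralShift T a e E) :
    Dense (Submodule.span 𝕜 (Set.range (chain a e)) : Set X) := by
  refine h.dense_span.mono (Submodule.span_le.2 ?_)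
  rintro _ ⟨s, rfl⟩
  rw [← inv_smul_smul₀ (potential_ne_zero (h.weight_ne_zero s.1) s.2) (e s)]
  exact Submodule.smul_mem _ _ (Submodule.subset_span ⟨s, rfl⟩)

theorem chain_isBigO (h : IsBilateralShift T a e E) {α : Type*} {L : Filter α} (i : ι)
    (t : α → ℤ) : (fun k => chain a e (i, t k)) =O[L] fun k => potential (a i) (t k) := by
  obtain ⟨C, hC⟩ := h.norm_basis_le i
  refine .of_bound C (.of_forall fun k => ?_)
  rw [chain, norm_smul, mul_comm]
  gcongr
  exact hC (t k)

end Chain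

section Sufficiency

variable {𝕜 X ι : Type*} [RCLike 𝕜] [NormedAddCommGroup X] [NormedSpace 𝕜 X]
  {T : X →L[𝕜] X} {a : ι → ℤ → 𝕜} {e : ι × ℤ → X} {E : ι × ℤ → StrongDual 𝕜 X} {N : ℕ}

theorem dense_of_weightCriterion [Countable ι] [CompleteSpace X] (h : IsBilateralShift T a e E)
    (hinv : (∀ i, ∃ C, ∀ j < 0, ‖(a i j)⁻¹‖ ≤ C) ∨ ∀ i, ∃ C, ∀ j > 0, ‖(a i j)⁻¹‖ ≤ C)
    {n : ℕ → ℕ} (hn : Tendsto n atTop atTop) (hw : WeightCriterion a N n) :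
    Dense (dSupercyclicVectors fun l : Fin N => T ^ (l + 1 : ℕ)) := by
  classical
  refine dense_dSupercyclicVectors_of_chain h.dense_span_chain h.map_chain fun S => ?_
  obtain ⟨n', hn'⟩ := exists_potential_isBigO h.weight_ne_zero h.norm_weight_le hinv hn S
  obtain ⟨c, hc, hcS⟩ := hw.exists_scalars h.weight_ne_zero (S.image Prod.fst)
  have hforw {s : ι × ℤ} (hs : s ∈ S) {l : ℕ} (hl : 1 ≤ l) :
      (fun k => chain a e (s.1, s.2 + l * n' k)) =O[atTop] fun k => forwardProd (a s.1) (l * n k) :=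
    (h.chain_isBigO s.1 _).trans (hn' s hs l hl).1
  have hback {s : ι × ℤ} (hs : s ∈ S) {l : ℕ} (hl : 1 ≤ l) :
      (fun k => chain a e (s.1, s.2 - l * n' k)) =O[atTop]
        fun k => backwardProd (a s.1) (l * n k) :=
    (h.chain_isBigO s.1 _).trans (hn' s hs l hl).2
  refine ⟨n', c, hc, fun s hs => ⟨fun l hl hl' => ?_, fun l hl hl' => ?_⟩⟩
  · obtain ⟨hcforw, hcback⟩ :=
      hcS s.1 (Finset.mem_image_of_mem _ hs) l (Finset.mem_Icc.2 ⟨hl, hl'⟩)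
    exact ⟨((Asymptotics.isBigO_refl c atTop).smul (hforw hs hl)).trans_tendsto hcforw,
      ((Asymptotics.isBigO_refl (fun k => (c k)⁻¹) atTop).smul (hback hs hl)).trans_tendsto hcback⟩
  · exact ⟨(hforw hs hl).trans_tendsto (tendsto_zero_iff_norm_tendsto_zero.2 (hw.2 s.1 l hl hl').2),
      (hback hs hl).trans_tendsto (tendsto_zero_iff_norm_tendsto_zero.2 (hw.2 s.1 l hl hl').1)⟩

end Sufficiency

end IsBilateralShift

theorem stmt10_general {𝕜 X ι : Type*} [RCLike 𝕜] [NormedAddCommGroup X] [NormedSpace 𝕜 X]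
    [CompleteSpace X] [Countable ι] [Nonempty ι] {T : X →L[𝕜] X} {a : ι → ℤ → 𝕜}
    {e : ι × ℤ → X} {E : ι × ℤ → StrongDual 𝕜 X} (h : IsBilateralShift T a e E)
    (hinv : (∀ i, ∃ C, ∀ j < 0, ‖(a i j)⁻¹‖ ≤ C) ∨ ∀ i, ∃ C, ∀ j > 0, ‖(a i j)⁻¹‖ ≤ C)
    {N : ℕ} (hN : 2 ≤ N) :
    Dense (dSupercyclicVectors fun l : Fin N => T ^ (l + 1 : ℕ)) ↔
      ∃ n : ℕ → ℕ, StrictMono n ∧ (∀ k, 1 ≤ n k) ∧ WeightCriterion a N n :=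
  ⟨h.exists_weightCriterion hN, fun ⟨_, hn, _, hw⟩ =>
    h.dense_of_weightCriterion hinv hn.tendsto_atTop hw⟩

section LpShift

variable {𝕜 K : Type*} [RCLike 𝕜] [NormedAddCommGroup K] [InnerProductSpace 𝕜 K]

theorem dense_span_lp_single {𝕜 ι κ : Type*} [NormedField 𝕜] [DecidableEq κ] {G : κ → Type*}
    [∀ j, NormedAddCommGroup (G j)] [∀ j, NormedSpace 𝕜 (G j)] {p : ENNReal} [Fact (1 ≤ p)]
    (hp : p ≠ ⊤) {f : ∀ j, ι → G j}
    (hf : ∀ j, Dense (Submodule.span 𝕜 (Set.range (f j)) : Set (G j))) :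
    Dense (Submodule.span 𝕜 (Set.range fun s : ι × κ => lp.single p s.2 (f s.2 s.1)) :
      Set (lp G p)) := by
  set V := Submodule.span 𝕜 (Set.range fun s : ι × κ => lp.single p s.2 (f s.2 s.1))
  have hsingle (j : κ) (v : G j) : lp.single p j v ∈ V.topologicalClosure := by
    have hle : Submodule.span 𝕜 (Set.range (f j)) ≤
        V.comap (lp.singleContinuousLinearMap 𝕜 G p j).toLinearMap := by
      rw [Submodule.span_le]
      rintro _ ⟨i, rfl⟩
      exact Submodule.subset_span ⟨(i, j), rfl⟩
    exact map_mem_closure (lp.singleContinuousLinearMap 𝕜 G p j).continuous (hf j v) hle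
  intro x
  exact V.isClosed_topologicalClosure.mem_of_tendsto (lp.hasSum_single hp x)
    (.of_forall fun F => Submodule.sum_mem _ fun j _ => hsingle j _)

variable {ι : Type*} {f : ι → K}

theorem lp_shift_single {p : ENNReal} {A : ℤ → K → K} (hA : ∀ j, A j 0 = 0)
    {T : lp (fun _ : ℤ => K) p → lp (fun _ : ℤ => K) p}
    (hT : ∀ x j, T x j = A (j - 1) (x (j - 1))) (j : ℤ) (v : K) :
    T (lp.single p j v) = lp.single p (j + 1) (A j v) := by
  ext j' : 2
  rw [hT]
  by_cases hj : j' = j + 1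
  · subst hj
    simp
  · rw [lp.single_apply_ne _ _ _ hj, lp.single_apply_ne _ _ _ (by lia), hA]

/-- The coordinate functional of the vector `f i` placed at position `j`, for orthonormal `f`. -/
noncomputable def lpCoord (𝕜 : Type*) [RCLike 𝕜] [InnerProductSpace 𝕜 K] (f : ι → K) (s : ι × ℤ) :
    StrongDual 𝕜 (lp (fun _ : ℤ => K) 2) :=
  (innerSL 𝕜 (f s.1)).comp (lp.evalCLM 𝕜 (fun _ : ℤ => K) 2 s.2)

theorem lpCoord_apply (s : ι × ℤ) (x : lp (fun _ : ℤ => K) 2) :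
    lpCoord 𝕜 f s x = inner 𝕜 (f s.1) (x s.2) :=
  rfl

theorem norm_lpCoord_le (s : ι × ℤ) : ‖lpCoord 𝕜 f s‖ ≤ ‖f s.1‖ := by
  refine ContinuousLinearMap.opNorm_le_bound _ (norm_nonneg _) fun x => ?_
  rw [lpCoord_apply]
  exact (norm_inner_le_norm _ _).trans (by gcongr; exact lp.norm_apply_le_norm two_ne_zero x s.2)

theorem lpCoord_single [DecidableEq ι] (hf : Orthonormal 𝕜 f) (s t : ι × ℤ) :
    lpCoord 𝕜 f s (lp.single 2 t.2 (f t.1)) = if s = t then 1 else 0 := by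
  rw [lpCoord_apply]
  by_cases hj : s.2 = t.2
  · rw [hj, lp.single_apply_self, orthonormal_iff_ite.1 hf]
    simp [Prod.ext_iff, hj]
  · rw [lp.single_apply_ne _ _ _ hj, inner_zero_right, if_neg (fun h => hj (congrArg Prod.snd h))]

theorem isBilateralShift_lp_single (hf : Orthonormal 𝕜 f)
    (hdense : Dense (Submodule.span 𝕜 (Set.range f) : Set K)) {a : ι → ℤ → 𝕜}
    (ha : ∀ i j, a i j ≠ 0) {A : ℤ → K →L[𝕜] K} (hA : ∀ j i, A j (f i) = a i j • f i)
    {T : lp (fun _ : ℤ => K) 2 →L[𝕜] lp (fun _ : ℤ => K) 2}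
    (hT : ∀ x j, T x j = A (j - 1) (x (j - 1))) :
    IsBilateralShift T a (fun s => lp.single 2 s.2 (f s.1)) (lpCoord 𝕜 f) where
  weight_ne_zero := ha
  map_basis i j := by
    rw [lp_shift_single (A := fun j => A j) (fun j => map_zero (A j)) hT, hA, lp.single_smul]
  coord_self s := by
    classical rw [lpCoord_single hf, if_pos rfl]
  coord_of_ne s t hst := by
    classical rw [lpCoord_single hf, if_neg hst]
  norm_basis_le i :=
    ⟨‖f i‖, fun j => (lp.norm_single (E := fun _ : ℤ => K) (p := 2) two_pos j (f i)).le⟩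
  norm_coord_le i := ⟨‖f i‖, fun j => norm_lpCoord_le (i, j)⟩
  dense_span := dense_span_lp_single (G := fun _ : ℤ => K) (f := fun _ => f)
    ENNReal.ofNat_ne_top fun _ => hdense

theorem norm_eigenvalue_le {A : K →L[𝕜] K} {v : K} {μ : 𝕜} (hv : v ≠ 0) (h : A v = μ • v) :
    ‖μ‖ ≤ ‖A‖ := by
  have hle := A.le_opNorm v
  rw [h, norm_smul] at hle
  exact le_of_mul_le_mul_right hle (norm_pos_iff.2 hv)

end LpShift

theorem stmt10
    {K : Type*} [NormedAddCommGroup K] [InnerProductSpace ℂ K] [CompleteSpace K]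
    (f : ℕ → K) (hf : Orthonormal ℂ f)
    (hfdense : Dense (Submodule.span ℂ (Set.range f) : Set K))
    (a : ℕ → ℤ → ℝ) (ha : ∀ (k : ℕ) (m : ℤ), 0 < a k m)
    (A : ℤ → K →L[ℂ] K) (hA : ∀ (m : ℤ) (k : ℕ), A m (f k) = (a k m : ℂ) • f k)
    (hbd : ∃ C : ℝ, ∀ m : ℤ, ‖A m‖ ≤ C)
    (A' : ℤ → K →L[ℂ] K) (hA' : ∀ (m : ℤ) (k : ℕ), A' m (f k) = ((a k m)⁻¹ : ℂ) • f k)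
    (hinv : ∃ c : ℝ, 0 < c ∧
      ((∀ m : ℤ, m < 0 → ‖A' m‖ ≤ c) ∨ (∀ m : ℤ, 0 < m → ‖A' m‖ ≤ c)))
    (T : lp (fun _ : ℤ => K) 2 →L[ℂ] lp (fun _ : ℤ => K) 2)
    (hT : ∀ (x : lp (fun _ : ℤ => K) 2) (j : ℤ),
      (T x : ∀ _ : ℤ, K) j = A (j - 1) ((x : ∀ _ : ℤ, K) (j - 1)))
    {N : ℕ} (hN : 2 ≤ N) :
    Dense {x : lp (fun _ : ℤ => K) 2 | Dense (Set.range fun p : ℂ × ℕ =>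
        fun l : Fin N => p.1 • ((T ^ ((l.1 + 1) * p.2)) x))}
      ↔
    ∃ n : ℕ → ℕ, StrictMono n ∧ (∀ k, 1 ≤ n k) ∧
      (∀ i₁ i₂ : ℕ, ∀ l : ℕ, 1 ≤ l → l ≤ N →
        Tendsto (fun k =>
            ‖(∏ v ∈ Finset.Icc 1 (l * n k), (a i₁ (-(v : ℤ)))⁻¹) • f i₁‖ *
            ‖(∏ v ∈ Finset.Icc 1 (N * n k), a i₂ (v : ℤ)) • f i₂‖) atTop (𝓝 0) ∧
        Tendsto (fun k =>
            ‖(∏ v ∈ Finset.Icc 1 (N * n k), (a i₁ (-(v : ℤ)))⁻¹) • f i₁‖ *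
            ‖(∏ v ∈ Finset.Icc 1 (l * n k), a i₂ (v : ℤ)) • f i₂‖) atTop (𝓝 0)) ∧
      (∀ i : ℕ, ∀ l : ℕ, 1 ≤ l → l ≤ N - 1 →
        Tendsto (fun k =>
            ‖(∏ v ∈ Finset.Icc 1 (l * n k), (a i (-(v : ℤ)))⁻¹) • f i‖) atTop (𝓝 0) ∧
        Tendsto (fun k =>
            ‖(∏ v ∈ Finset.Icc 1 (l * n k), a i (v : ℤ)) • f i‖) atTop (𝓝 0)) := by
  have hbdd {j : ℤ} {c : ℝ} (hc : ‖A' j‖ ≤ c) (i : ℕ) : ‖((a i j : ℂ))⁻¹‖ ≤ c :=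
    (norm_eigenvalue_le (hf.ne_zero i) (hA' j i)).trans hc
  obtain ⟨c, -, hinv⟩ := hinv
  simpa [dSupercyclicVectors, WeightCriterion, forwardProd, backwardProd, norm_smul, hf.1,
    ← pow_mul] using stmt10_general
    (isBilateralShift_lp_single hf hfdense (fun i j => Complex.ofReal_ne_zero.2 (ha i j).ne')
      hA hT)
    (hinv.imp (fun h i => ⟨c, fun j hj => hbdd (h j hj) i⟩)
      fun h i => ⟨c, fun j hj => hbdd (h j hj) i⟩)
    hN
end

section
/- For each s ∈ ℕ let C_s = {2^{2s+1}−(2s+1), …, 2^{2s+1}−1} and D_s = {2^{2s+1}, …, 2^{2s+1}+(2s+1)−1}, and set C = ∪_{s≥0} C_s, D = ∪_{s≥0} D_s, E = {−2^{2s+1} : s ∈ ℕ}. Define positive invertible diagonal operators (A_n)_{n∈ℤ} on K by: if n ∈ C then A_n f_k = (1/2) f_k for 0 ≤ k ≤ n and A_n f_k = f_k for k > n; if n ∈ D then A_n f_k = 2 f_k for 0 ≤ k ≤ n and A_n f_k = f_k for k > n; if n ∈ E then A_n f_k = 2 f_k for 0 ≤ k ≤ −n and A_n f_k = f_k for k >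 −n; and A_n f_k = f_k for all k if n ∈ ℤ \ (C ∪ D ∪ E). Let T be the bilateral forward operator weighted shift on ℓ²(ℤ,K) with weight sequence (A_n)_{n∈ℤ}. Then T and T² are densely d-supercyclic, i.e. the set of x ∈ ℓ²(ℤ,K) such that {λ·(T^n x, T^{2n} x) : λ ∈ ℂ, n ∈ ℕ} is dense in ℓ²(ℤ,K)² is dense in ℓ²(ℤ,K). -/
open Filter Topology

/-- `C = ⋃ₛ {2^{2s+1} - (2s+1), …, 2^{2s+1} - 1}` as a set of integers. -/
def Cset : Set ℤ :=
  ⋃ s : ℕ, Set.Icc ((2 : ℤ) ^ (2 * s + 1) - (2 * s + 1)) ((2 : ℤ) ^ (2 * s + 1) - 1)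

/-- `D = ⋃ₛ {2^{2s+1}, …, 2^{2s+1} + (2s+1) - 1}` as a set of integers. -/
def Dset : Set ℤ :=
  ⋃ s : ℕ, Set.Icc ((2 : ℤ) ^ (2 * s + 1)) ((2 : ℤ) ^ (2 * s + 1) + (2 * s + 1) - 1)

/-- `E = {-2^{2s+1} : s ∈ ℕ}` as a set of integers. -/
def Eset : Set ℤ := Set.range fun s : ℕ => -(2 : ℤ) ^ (2 * s + 1)

/-!
By Baire's theorem it suffices to find scalars `c t → 0` and times `n t` such that the operators
`c t • (T ^ n t, T ^ (2 * n t))` tend to zero on a dense subspace and have, over a dense subspace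
of the square, approximate right inverses that tend to zero. Take `n t = 2 ^ (4 * t + 1)` and
`c t = 2 ^ (-t)`. On the bilateral orbit through a basis vector built from `f k`, the logarithm of
the norm is eventually the same at all positions `4 ^ s`, lies `2 * s + 1` below this value at
`2 ^ (2 * s + 1)` (the weights on `C` push it down, those on `D` bring it back), and is at most a
constant minus `s` at `-2 ^ (2 * s + 1)` (the weights on `E`). So, with `n = n t`, the orbit tends
to zero at `n`, stays bounded at `2 * n`, and decays like `4 ^ (-t)` at `-n` and `-2 * n`, which
beats the factor `2 ^ t` that the right inverses cost.
-/

open scoped ENNReal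

section Universality

theorem dense_setOf_denseRange_apply {ι X Y : Type*} [TopologicalSpace X] [BaireSpace X]
    [TopologicalSpace Y] [SecondCountableTopology Y] {F : ι → X → Y}
    (hF : ∀ i, Continuous (F i))
    (htrans : ∀ U : Set X, IsOpen U → U.Nonempty → ∀ V : Set Y, IsOpen V → V.Nonempty →
      ∃ i, (U ∩ F i ⁻¹' V).Nonempty) :
    Dense {x | DenseRange fun i => F i x} := by
  have hbasis := TopologicalSpace.isBasis_countableBasis Y
  have hdense : Dense (⋂ V ∈ TopologicalSpace.countableBasis Y, ⋃ i, F i ⁻¹' V) := by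
    refine dense_biInter_of_isOpen
      (fun V hV => isOpen_iUnion fun i => (hbasis.isOpen hV).preimage (hF i))
      (TopologicalSpace.countable_countableBasis Y) fun V hV => ?_
    refine dense_iff_inter_open.2 fun U hU hUne => ?_
    obtain ⟨i, x, hxU, hxV⟩ := htrans U hU hUne V (hbasis.isOpen hV)
      (TopologicalSpace.nonempty_of_mem_countableBasis hV)
    exact ⟨x, hxU, Set.mem_iUnion.2 ⟨i, hxV⟩⟩
  refine hdense.mono fun x hx => hbasis.dense_iff.2 fun V hV _ => ?_
  obtain ⟨i, hi⟩ := Set.mem_iUnion.1 (Set.mem_iInter₂.1 hx V hV)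
  exact ⟨F i x, hi, i, rfl⟩

variable {ι 𝕜 X Y : Type*} {l : Filter ι} [Semiring 𝕜]
  [TopologicalSpace X] [AddCommMonoid X] [Module 𝕜 X]
  [TopologicalSpace Y] [AddCommMonoid Y] [Module 𝕜 Y] [ContinuousAdd Y] [ContinuousConstSMul 𝕜 Y]

theorem tendsto_apply_zero_of_mem_span {S : ι → X →L[𝕜] Y} {D : Set X}
    (hD : ∀ x ∈ D, Tendsto (fun i => S i x) l (𝓝 0)) {x : X} (hx : x ∈ Submodule.span 𝕜 D) :
    Tendsto (fun i => S i x) l (𝓝 0) := by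
  induction hx using Submodule.span_induction with
  | mem x hx => exact hD x hx
  | zero => simp [tendsto_const_nhds]
  | add x y _ _ hx hy => simpa using hx.add hy
  | smul a x _ hx => simpa using hx.const_smul a

variable [ContinuousAdd X] [ContinuousConstSMul 𝕜 X]

theorem exists_tendsto_zero_of_mem_span {S : ι → X →L[𝕜] Y} {E : Set Y}
    (hE : ∀ y ∈ E, ∃ u : ι → X, Tendsto u l (𝓝 0) ∧ Tendsto (fun i => S i (u i)) l (𝓝 y))
    {y : Y} (hy : y ∈ Submodule.span 𝕜 E) :
    ∃ u : ι → X, Tendsto u l (𝓝 0) ∧ Tendsto (fun i => S i (u i)) l (𝓝 y) := by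
  induction hy using Submodule.span_induction with
  | mem y hy => exact hE y hy
  | zero => exact ⟨0, tendsto_const_nhds, by simp [tendsto_const_nhds]⟩
  | add y z _ _ hy hz =>
    obtain ⟨u, hu, hSu⟩ := hy
    obtain ⟨v, hv, hSv⟩ := hz
    exact ⟨fun i => u i + v i, by simpa using hu.add hv, by simpa using hSu.add hSv⟩
  | smul a y _ hy =>
    obtain ⟨u, hu, hSu⟩ := hy
    exact ⟨fun i => a • u i, by simpa using hu.const_smul a, by simpa using hSu.const_smul a⟩

theorem dense_setOf_denseRange_of_tendsto [l.NeBot] [BaireSpace X] [SecondCountableTopology Y]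
    {S : ι → X →L[𝕜] Y} {D : Set X} {E : Set Y}
    (hDdense : Dense (Submodule.span 𝕜 D : Set X)) (hEdense : Dense (Submodule.span 𝕜 E : Set Y))
    (hD : ∀ x ∈ D, Tendsto (fun i => S i x) l (𝓝 0))
    (hE : ∀ y ∈ E, ∃ u : ι → X, Tendsto u l (𝓝 0) ∧ Tendsto (fun i => S i (u i)) l (𝓝 y)) :
    Dense {x | DenseRange fun i => S i x} := by
  refine dense_setOf_denseRange_apply (fun i => (S i).continuous) fun U hU hUne V hV hVne => ?_
  obtain ⟨x, hxU, hx⟩ := hDdense.inter_open_nonempty U hU hUne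
  obtain ⟨y, hyV, hy⟩ := hEdense.inter_open_nonempty V hV hVne
  obtain ⟨u, hu, hSu⟩ := exists_tendsto_zero_of_mem_span hE hy
  have hxu : Tendsto (fun i => x + u i) l (𝓝 x) := by simpa using hu.const_add x
  have hSxu : Tendsto (fun i => S i (x + u i)) l (𝓝 y) := by
    simpa using (tendsto_apply_zero_of_mem_span hD hx).add hSu
  obtain ⟨i, hiU, hiV⟩ :=
    ((hxu.eventually (hU.mem_nhds hxU)).and (hSxu.eventually (hV.mem_nhds hyV))).exists
  exact ⟨i, x + u i, hiU, hiV⟩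

end Universality

section DisjointSupercyclicity

/-- `x` is a d-supercyclic vector for the pair `(T₁, T₂)`: its joint orbit under the powers of
`T₁` and `T₂`, up to a common scalar, is dense in `X × X`. The pair is densely d-supercyclic when
such vectors are dense. -/
def IsDSupercyclicVector {𝕜 X : Type*} [Semiring 𝕜] [TopologicalSpace X] [AddCommMonoid X]
    [Module 𝕜 X] (T₁ T₂ : X →L[𝕜] X) (x : X) : Prop :=
  Dense (Set.range fun p : 𝕜 × ℕ => (p.1 • (T₁ ^ p.2) x, p.1 • (T₂ ^ p.2) x))

theorem iterate_apply_of_forall_apply_eq_add_one {X : Type*} {T : X → X} {g : ℤ → X}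
    (hg : ∀ m, T (g m) = g (m + 1)) (n : ℕ) (m : ℤ) : T^[n] (g m) = g (m + n) := by
  have hsemiconj : Function.Semiconj g (· + 1) T := fun m => (hg m).symm
  simpa using (hsemiconj.iterate_right n m).symm

variable {ι X : Type*} {l : Filter ι} [l.NeBot] [TopologicalSpace X] [AddCommMonoid X]
  [ContinuousAdd X] [BaireSpace X] [SecondCountableTopology X]

theorem dense_isDSupercyclicVector_of_tendsto {𝕜 : Type*} [CommSemiring 𝕜] [Module 𝕜 X]
    [ContinuousConstSMul 𝕜 X] {T₁ T₂ : X →L[𝕜] X} {G : Set X}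
    (hG : Dense (Submodule.span 𝕜 G : Set X)) (n : ι → ℕ) (c : ι → 𝕜)
    (hzero : ∀ x ∈ G, Tendsto (fun i => c i • (T₁ ^ n i) x) l (𝓝 0) ∧
      Tendsto (fun i => c i • (T₂ ^ n i) x) l (𝓝 0))
    (hfst : ∀ x ∈ G, ∃ u : ι → X, Tendsto u l (𝓝 0) ∧
      Tendsto (fun i => c i • (T₁ ^ n i) (u i)) l (𝓝 x) ∧
      Tendsto (fun i => c i • (T₂ ^ n i) (u i)) l (𝓝 0))
    (hsnd : ∀ x ∈ G, ∃ u : ι → X, Tendsto u l (𝓝 0) ∧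
      Tendsto (fun i => c i • (T₁ ^ n i) (u i)) l (𝓝 0) ∧
      Tendsto (fun i => c i • (T₂ ^ n i) (u i)) l (𝓝 x)) :
    Dense {x | IsDSupercyclicVector T₁ T₂ x} := by
  let S (i : ι) : X →L[𝕜] X × X := (c i • T₁ ^ n i).prod (c i • T₂ ^ n i)
  have hGG : Dense (Submodule.span 𝕜 (LinearMap.inl 𝕜 X X '' G ∪ LinearMap.inr 𝕜 X X '' G) :
      Set (X × X)) := by
    rw [LinearMap.span_inl_union_inr]
    exact hG.prod hG
  have hS : Dense {x | DenseRange fun i => S i x} := by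
    refine dense_setOf_denseRange_of_tendsto (l := l) hG hGG
      (fun x hx => (hzero x hx).1.prodMk_nhds (hzero x hx).2) ?_
    rintro _ (⟨x, hx, rfl⟩ | ⟨x, hx, rfl⟩)
    · obtain ⟨u, hu, h₁, h₂⟩ := hfst x hx
      exact ⟨u, hu, h₁.prodMk_nhds h₂⟩
    · obtain ⟨u, hu, h₁, h₂⟩ := hsnd x hx
      exact ⟨u, hu, h₁.prodMk_nhds h₂⟩
  refine hS.mono fun x hx => Dense.mono ?_ hx
  rintro _ ⟨i, rfl⟩
  exact ⟨(c i, n i), rfl⟩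

theorem dense_isDSupercyclicVector_sq_of_orbits {𝕜 : Type*} [Semifield 𝕜] [TopologicalSpace 𝕜]
    [Module 𝕜 X] [ContinuousSMul 𝕜 X] {T : X →L[𝕜] X} {G : Set X}
    (hG : Dense (Submodule.span 𝕜 G : Set X)) (n : ι → ℕ) {c : ι → 𝕜}
    (hc₀ : ∀ i, c i ≠ 0) (hc : Tendsto c l (𝓝 0))
    (horbit : ∀ x ∈ G, ∃ g : ℤ → X, g 0 = x ∧ (∀ m, T (g m) = g (m + 1)) ∧
      Tendsto (fun i => g (n i)) l (𝓝 0) ∧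
      Tendsto (fun i => c i • g (2 * n i)) l (𝓝 0) ∧
      Tendsto (fun i => (c i)⁻¹ • g (-n i)) l (𝓝 0) ∧
      Tendsto (fun i => (c i)⁻¹ • g (-(2 * n i))) l (𝓝 0)) :
    Dense {x | IsDSupercyclicVector T (T ^ 2) x} := by
  refine dense_isDSupercyclicVector_of_tendsto (l := l) hG n c ?_ ?_ ?_ <;> intro x hx <;>
    obtain ⟨g, rfl, hg, hpos, hpos₂, hneg, hneg₂⟩ := horbit x hx <;>
    have hiter := iterate_apply_of_forall_apply_eq_add_one hg <;>
    simp only [← pow_mul]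
  · exact ⟨by simpa [hiter] using hc.smul hpos, by simpa [hiter] using hpos₂⟩
  · have hshift (i : ι) : -(n i : ℤ) + 2 * n i = n i := by ring
    refine ⟨fun i => (c i)⁻¹ • g (-n i), hneg, ?_, ?_⟩
    · simp [hiter, hc₀, tendsto_const_nhds]
    · simpa [hiter, hc₀, hshift] using hpos
  · have hshift (i : ι) : -(2 * n i : ℤ) + n i = -n i := by ring
    have hneg' : Tendsto (fun i => g (-n i)) l (𝓝 0) := by simpa [hc₀] using hc.smul hneg
    refine ⟨fun i => (c i)⁻¹ • g (-(2 * n i)), hneg₂, ?_, ?_⟩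
    · simpa [hiter, hc₀, hshift] using hneg'
    · simp [hiter, hc₀, tendsto_const_nhds]

end DisjointSupercyclicity

section Preliminaries

theorem tendsto_zpow_atBot_nhds_zero {a : ℝ} (ha : 1 < a) :
    Tendsto (fun m : ℤ => a ^ m) atBot (𝓝 0) := by
  simpa only [Function.comp_def, id, Real.rpow_intCast] using
    (tendsto_rpow_atBot_of_base_gt_one a ha).comp (tendsto_intCast_atBot_iff.2 tendsto_id)

theorem tendsto_zpow_smul_nhds_zero {ι 𝕜 X : Type*} [NormedDivisionRing 𝕜]
    [SeminormedAddCommGroup X] [Module 𝕜 X] [NormSMulClass 𝕜 X] {l : Filter ι} {a : 𝕜}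
    (ha : 1 < ‖a‖) {e : ι → ℤ} (he : Tendsto e l atBot) {v : ι → X} {M : ℝ}
    (hv : ∀ i, ‖v i‖ ≤ M) : Tendsto (fun i => a ^ e i • v i) l (𝓝 0) := by
  have hbound : Tendsto (fun i => ‖a‖ ^ e i * M) l (𝓝 0) := by
    simpa using ((tendsto_zpow_atBot_nhds_zero ha).comp he).mul_const M
  refine squeeze_zero_norm (fun i => ?_) hbound
  rw [norm_smul, norm_zpow]
  gcongr
  exact hv i

theorem separableSpace_of_dense_span_s11 {𝕜 X : Type*} [Semiring 𝕜] [TopologicalSpace 𝕜]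
    [TopologicalSpace.SeparableSpace 𝕜] [TopologicalSpace X] [AddCommMonoid X] [Module 𝕜 X]
    [ContinuousAdd X] [ContinuousSMul 𝕜 X] {G : Set X} (hG : G.Countable)
    (hdense : Dense (Submodule.span 𝕜 G : Set X)) : TopologicalSpace.SeparableSpace X := by
  have hsep := (hG.isSeparable.span (R := 𝕜)).closure
  rwa [hdense.closure_eq, TopologicalSpace.isSeparable_univ_iff] at hsep

theorem dense_span_iUnion_single {𝕜 α : Type*} [DecidableEq α] {E : α → Type*} [NormedRing 𝕜]
    [∀ i, NormedAddCommGroup (E i)] [∀ i, Module 𝕜 (E i)] [∀ i, IsBoundedSMul 𝕜 (E i)]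
    {p : ℝ≥0∞} [Fact (1 ≤ p)] (hp : p ≠ ∞) {s : ∀ i, Set (E i)}
    (hs : ∀ i, Dense (Submodule.span 𝕜 (s i) : Set (E i))) :
    Dense (Submodule.span 𝕜 (⋃ i, lp.single p i '' s i) : Set (lp E p)) := by
  set N := Submodule.span 𝕜 (⋃ i, lp.single p i '' s i)
  have hsingle (i : α) (y : E i) : lp.single p i y ∈ closure (N : Set (lp E p)) := by
    refine map_mem_closure (lp.isometry_single i).continuous (hs i y) fun z hz => ?_
    have hle : Submodule.span 𝕜 (s i) ≤ N.comap (lp.lsingle (𝕜 := 𝕜) p i) :=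
      Submodule.span_le.2 fun z hz =>
        Submodule.subset_span (Set.mem_iUnion.2 ⟨i, Set.mem_image_of_mem _ hz⟩)
    exact hle hz
  intro x
  exact isClosed_closure.mem_of_tendsto (lp.hasSum_single hp x)
    (Eventually.of_forall fun t => N.topologicalClosure.sum_mem fun i _ => hsingle i _)

/-- The discrete antiderivative of `e` that vanishes at `0`: the solution of
`h (i + 1) = h i + e i`, which along the negative integers subtracts the values of `e`
(recall that `Int.negSucc n = -(n + 1)`). -/
def antidifference {G : Type*} [AddCommGroup G] (e : ℤ → G) : ℤ → G
  | .ofNat n => ∑ m ∈ Finset.range n, e m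
  | .negSucc n => -∑ m ∈ Finset.range (n + 1), e (.negSucc m)

theorem antidifference_add_one {G : Type*} [AddCommGroup G] (e : ℤ → G) :
    ∀ i, antidifference e (i + 1) = antidifference e i + e i
  | .ofNat n => Finset.sum_range_succ _ n
  | .negSucc 0 => by simp [antidifference]
  | .negSucc (n + 1) => by
    change antidifference e (.negSucc n) = _
    simp [antidifference, Finset.sum_range_succ _ (n + 1)]

end Preliminaries

section Weights

/-- The interval `[4 ^ s, 4 ^ (s + 1))`. These intervals are disjoint, and the `s`-th one contains
the `s`-th blocks of `Cset` and `Dset`. -/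
def dyadicBlock (s : ℕ) : Set ℤ := Set.Ico (2 ^ (2 * s)) (2 ^ (2 * s + 2))

theorem eq_of_mem_dyadicBlock {r s : ℕ} {i : ℤ} (hr : i ∈ dyadicBlock r) (hs : i ∈ dyadicBlock s) :
    r = s := by
  have hrs : 2 * r < 2 * s + 2 := (pow_lt_pow_iff_right₀ one_lt_two).1 (hr.1.trans_lt hs.2)
  have hsr : 2 * s < 2 * r + 2 := (pow_lt_pow_iff_right₀ one_lt_two).1 (hs.1.trans_lt hr.2)
  omega

theorem two_mul_add_one_le_two_pow (s : ℕ) : 2 * (s : ℤ) + 1 ≤ 2 ^ (2 * s) := by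
  exact_mod_cast Nat.lt_two_pow_self (n := 2 * s)

theorem Icc_subset_dyadicBlock (s : ℕ) :
    Set.Icc ((2 : ℤ) ^ (2 * s + 1) - (2 * s + 1)) (2 ^ (2 * s + 1) + (2 * s + 1) - 1) ⊆
      dyadicBlock s := by
  rintro i ⟨hi₁, hi₂⟩
  have hs := two_mul_add_one_le_two_pow s
  rw [pow_succ] at hi₁ hi₂
  rw [dyadicBlock, Set.mem_Ico, pow_add]
  omega

theorem mem_Cset_iff {s : ℕ} {i : ℤ} (hi : i ∈ dyadicBlock s) :
    i ∈ Cset ↔ 2 ^ (2 * s + 1) - (2 * s + 1) ≤ i ∧ i < 2 ^ (2 * s + 1) := by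
  refine ⟨fun h => ?_, fun h => Set.mem_iUnion.2 ⟨s, h.1, Int.le_sub_one_of_lt h.2⟩⟩
  obtain ⟨r, hr₁, hr₂⟩ := Set.mem_iUnion.1 h
  obtain rfl := eq_of_mem_dyadicBlock (Icc_subset_dyadicBlock r ⟨hr₁, by omega⟩) hi
  exact ⟨hr₁, by omega⟩

theorem mem_Dset_iff {s : ℕ} {i : ℤ} (hi : i ∈ dyadicBlock s) :
    i ∈ Dset ↔ 2 ^ (2 * s + 1) ≤ i ∧ i < 2 ^ (2 * s + 1) + (2 * s + 1) := by
  refine ⟨fun h => ?_, fun h => Set.mem_iUnion.2 ⟨s, h.1, Int.le_sub_one_of_lt h.2⟩⟩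
  obtain ⟨r, hr₁, hr₂⟩ := Set.mem_iUnion.1 h
  obtain rfl := eq_of_mem_dyadicBlock (Icc_subset_dyadicBlock r ⟨by omega, hr₂⟩) hi
  exact ⟨hr₁, by omega⟩

theorem pos_of_mem_Cset_union_Dset {i : ℤ} (hi : i ∈ Cset ∪ Dset) : 0 < i := by
  obtain ⟨s, hs⟩ : ∃ s : ℕ, i ∈ dyadicBlock s := by
    rcases hi with hi | hi <;> obtain ⟨s, hs₁, hs₂⟩ := Set.mem_iUnion.1 hi <;>
      exact ⟨s, Icc_subset_dyadicBlock s ⟨by omega, by omega⟩⟩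
  exact (by positivity : (0 : ℤ) < 2 ^ (2 * s)).trans_le hs.1

theorem neg_of_mem_Eset {i : ℤ} (hi : i ∈ Eset) : i < 0 := by
  obtain ⟨s, rfl⟩ := hi
  simp

open Classical in
/-- The base-2 logarithm of the weight at position `n` on the `k`-th basis vector, so that
`A n (f k) = 2 ^ weightExponent k n • f k`. The cut-offs `k ≤ n` on `Cset ∪ Dset` and `k ≤ -n` on
`Eset` are both encoded as `k ≤ |n|`. -/
noncomputable def weightExponent (k : ℕ) (n : ℤ) : ℤ :=
  if |n| < k then 0 else if n ∈ Cset then -1 else if n ∈ Dset ∪ Eset then 1 else 0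

theorem abs_weightExponent_le (k : ℕ) (n : ℤ) : |weightExponent k n| ≤ 1 := by
  unfold weightExponent
  split_ifs <;> simp

theorem weightExponent_nonneg_of_neg (k : ℕ) {n : ℤ} (hn : n < 0) : 0 ≤ weightExponent k n := by
  have hC : n ∉ Cset := fun h => (pos_of_mem_Cset_union_Dset (.inl h)).not_gt hn
  unfold weightExponent
  split_ifs <;> simp

theorem weightExponent_of_mem_dyadicBlock {k s : ℕ} (hk : k ≤ s) {i : ℤ}
    (hi : i ∈ dyadicBlock s) :
    weightExponent k i =
      if 2 ^ (2 * s + 1) - (2 * s + 1) ≤ i ∧ i < 2 ^ (2 * s + 1) then -1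
      else if 2 ^ (2 * s + 1) ≤ i ∧ i < 2 ^ (2 * s + 1) + (2 * s + 1) then 1 else 0 := by
  have hs := two_mul_add_one_le_two_pow s
  have hi₁ := hi.1
  have hE : i ∉ Eset := fun h => (neg_of_mem_Eset h).not_ge (by omega)
  have hki : ¬|i| < k := by
    have := le_abs_self i
    omega
  simp only [weightExponent, if_neg hki, Set.mem_union, hE, or_false, mem_Cset_iff hi,
    mem_Dset_iff hi]

theorem weightExponent_neg_two_pow {k s : ℕ} (hk : k ≤ s) :
    weightExponent k (-2 ^ (2 * s + 1)) = 1 := by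
  have hE : (-2 ^ (2 * s + 1) : ℤ) ∈ Eset := ⟨s, rfl⟩
  have hC : (-2 ^ (2 * s + 1) : ℤ) ∉ Cset := fun h =>
    (pos_of_mem_Cset_union_Dset (.inl h)).not_gt (neg_of_mem_Eset hE)
  have hks : ¬|(-2 ^ (2 * s + 1) : ℤ)| < k := by
    have := two_mul_add_one_le_two_pow s
    rw [abs_neg, abs_of_pos (by positivity), pow_succ]
    omega
  rw [weightExponent, if_neg hks, if_neg hC, if_pos (.inr hE)]

theorem weight_apply_eq_zpow_smul {𝕜 K : Type*} [DivisionRing 𝕜] [AddCommMonoid K]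
    [Module 𝕜 K] {f : ℕ → K} {A : ℤ → K → K}
    (hAC : ∀ n ∈ Cset, ∀ k : ℕ, A n (f k) = if (k : ℤ) ≤ n then (2 : 𝕜)⁻¹ • f k else f k)
    (hAD : ∀ n ∈ Dset, ∀ k : ℕ, A n (f k) = if (k : ℤ) ≤ n then (2 : 𝕜) • f k else f k)
    (hAE : ∀ n ∈ Eset, ∀ k : ℕ, A n (f k) = if (k : ℤ) ≤ -n then (2 : 𝕜) • f k else f k)
    (hAelse : ∀ n : ℤ, n ∉ Cset ∪ Dset ∪ Eset → ∀ k : ℕ, A n (f k) = f k) (n : ℤ) (k : ℕ) :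
    A n (f k) = (2 : 𝕜) ^ weightExponent k n • f k := by
  by_cases hC : n ∈ Cset
  · rw [hAC n hC, weightExponent, abs_of_pos (pos_of_mem_Cset_union_Dset (.inl hC))]
    split_ifs <;> first | omega | simp
  by_cases hD : n ∈ Dset
  · rw [hAD n hD, weightExponent, abs_of_pos (pos_of_mem_Cset_union_Dset (.inr hD))]
    simp only [hC, hD, Set.mem_union, true_or, if_true, if_false]
    split_ifs <;> first | omega | simp
  by_cases hE : n ∈ Eset
  · rw [hAE n hE, weightExponent, abs_of_neg (neg_of_mem_Eset hE)]
    simp only [hC, hE, Set.mem_union, or_true, if_true, if_false]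
    split_ifs <;> first | omega | simp
  · simp [hAelse n (by simp [hC, hD, hE]), weightExponent, hC, hD, hE]

/-- The base-2 logarithm of the norm along the bilateral orbit of the weighted shift through the
`k`-th basis vector, as a function of the position and normalised to vanish at position `0`. -/
noncomputable def height (k : ℕ) : ℤ → ℤ := antidifference (weightExponent k)

theorem height_add_one (k : ℕ) (i : ℤ) : height k (i + 1) = height k i + weightExponent k i :=
  antidifference_add_one _ i

theorem height_add_le (k : ℕ) (j i : ℤ) : height k (j + i) ≤ height k i + |j| := by
  have hstep (i : ℤ) := abs_le.1 (abs_weightExponent_le k i)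
  rcases le_total 0 j with hj | hj
  · have hanti : Antitone fun i => height k i - i := antitone_int_of_succ_le fun i => by
      linarith [height_add_one k i, hstep i]
    rw [abs_of_nonneg hj]
    linarith [hanti (le_add_of_nonneg_left hj : i ≤ j + i)]
  · have hmono : Monotone fun i => height k i + i := monotone_int_of_le_succ fun i => by
      linarith [height_add_one k i, hstep i]
    rw [abs_of_nonpos hj]
    linarith [hmono (add_le_of_nonpos_left hj : j + i ≤ i)]

theorem monotoneOn_height (k : ℕ) : MonotoneOn (height k) (Set.Iic 0) :=
  monotoneOn_of_le_add_one Set.ordConnected_Iic fun i _ _ hi => by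
    rw [height_add_one]
    exact le_add_of_nonneg_right (weightExponent_nonneg_of_neg k (Int.lt_of_add_one_le hi))

theorem height_of_mem_dyadicBlock {k s : ℕ} (hk : k ≤ s) {i : ℤ} (hi : 2 ^ (2 * s) ≤ i)
    (hi' : i ≤ 2 ^ (2 * s + 2)) :
    height k i = height k (2 ^ (2 * s)) - max 0 (2 * s + 1 - |i - 2 ^ (2 * s + 1)|) := by
  have hs := two_mul_add_one_le_two_pow s
  simp only [abs_eq_max_neg]
  induction i, hi using Int.leInduction with
  | base => omega
  | succ i hi ih =>
    rw [height_add_one, ih (by omega), weightExponent_of_mem_dyadicBlock hk ⟨hi, by omega⟩]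
    omega

theorem height_two_pow_even {k s : ℕ} (hk : k ≤ s) :
    height k (2 ^ (2 * s)) = height k (2 ^ (2 * k)) := by
  induction s, hk using Nat.le_induction with
  | base => rfl
  | succ s hk ih =>
    have hs := two_mul_add_one_le_two_pow s
    have hpow : (2 : ℤ) ^ (2 * s + 1) = 2 * 2 ^ (2 * s) := pow_succ' _ _
    have hpow' : (2 : ℤ) ^ (2 * s + 2) = 4 * 2 ^ (2 * s) := by ring
    rw [mul_add_one, height_of_mem_dyadicBlock hk (by omega) le_rfl, ih, hpow, hpow',
      abs_of_nonneg (by omega)]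
    omega

theorem height_two_pow_odd {k s : ℕ} (hk : k ≤ s) :
    height k (2 ^ (2 * s + 1)) = height k (2 ^ (2 * k)) - (2 * s + 1) := by
  rw [height_of_mem_dyadicBlock hk (by gcongr <;> omega) (by gcongr <;> omega),
    height_two_pow_even hk, sub_self, abs_zero, sub_zero, max_eq_right (by positivity)]

theorem height_neg_two_pow_odd_le {k s : ℕ} (hk : k ≤ s) :
    height k (-2 ^ (2 * s + 1)) ≤ height k (-2 ^ (2 * k + 1)) + k - s := by
  induction s, hk using Nat.le_induction with
  | base => simp
  | succ s hk ih =>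
    have hstep := height_add_one k (-2 ^ (2 * (s + 1) + 1))
    rw [weightExponent_neg_two_pow (by omega)] at hstep
    have hpow : (2 : ℤ) ^ (2 * (s + 1) + 1) = 4 * 2 ^ (2 * s + 1) := by ring
    have hpos : (0 : ℤ) < 2 ^ (2 * s + 1) := by positivity
    have hmono : height k (-2 ^ (2 * (s + 1) + 1) + 1) ≤ height k (-2 ^ (2 * s + 1)) :=
      monotoneOn_height k (by simp only [Set.mem_Iic]; omega) (by simp) (by omega)
    push_cast
    omega

theorem tendsto_atBot_of_le_sub_natCast {e : ℕ → ℤ} {M : ℤ} {k : ℕ} (he : ∀ t ≥ k, e t ≤ M - t) :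
    Tendsto e atTop atBot := by
  refine tendsto_atBot_mono' atTop ((eventually_ge_atTop k).mono he) ?_
  exact tendsto_atBot_add_const_left _ M (tendsto_neg_atTop_atBot.comp tendsto_natCast_atTop_atTop)

theorem tendsto_height_add_two_pow (k : ℕ) (j : ℤ) :
    Tendsto (fun t : ℕ => height k (j + 2 ^ (4 * t + 1))) atTop atBot :=
  tendsto_atBot_of_le_sub_natCast (k := k) (M := height k (2 ^ (2 * k)) + |j|) fun t ht => by
    have hle := height_add_le k j (2 ^ (2 * (2 * t) + 1))
    rw [height_two_pow_odd (by omega), ← mul_assoc] at hle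
    push_cast at hle
    linarith

theorem tendsto_height_add_two_mul_two_pow (k : ℕ) (j : ℤ) :
    Tendsto (fun t : ℕ => height k (j + 2 * 2 ^ (4 * t + 1)) - t) atTop atBot :=
  tendsto_atBot_of_le_sub_natCast (k := k) (M := height k (2 ^ (2 * k)) + |j|) fun t ht => by
    have hle := height_add_le k j (2 ^ (2 * (2 * t + 1)))
    rw [height_two_pow_even (by omega)] at hle
    have hpow : (2 : ℤ) ^ (2 * (2 * t + 1)) = 2 * 2 ^ (4 * t + 1) := by ring
    rw [hpow] at hle
    linarith

theorem tendsto_height_sub_two_pow (k : ℕ) (j : ℤ) :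
    Tendsto (fun t : ℕ => height k (j - 2 ^ (4 * t + 1)) + t) atTop atBot :=
  tendsto_atBot_of_le_sub_natCast (k := k) (M := height k (-2 ^ (2 * k + 1)) + k + |j|)
    fun t ht => by
      have hle := height_add_le k j (-2 ^ (2 * (2 * t) + 1))
      have hneg := height_neg_two_pow_odd_le (k := k) (s := 2 * t) (by omega)
      rw [show 2 * (2 * t) + 1 = 4 * t + 1 by ring] at hle hneg
      push_cast at hneg
      rw [sub_eq_add_neg j]
      linarith

theorem tendsto_height_sub_two_mul_two_pow (k : ℕ) (j : ℤ) :
    Tendsto (fun t : ℕ => height k (j - 2 * 2 ^ (4 * t + 1)) + t) atTop atBot :=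
  tendsto_atBot_of_le_sub_natCast (k := k) (M := height k (-2 ^ (2 * k + 1)) + k + |j|)
    fun t ht => by
      have hle := height_add_le k j (-(2 * 2 ^ (4 * t + 1)))
      have hpos : (0 : ℤ) < 2 ^ (4 * t + 1) := by positivity
      have hmono : height k (-(2 * 2 ^ (4 * t + 1))) ≤ height k (-2 ^ (4 * t + 1)) :=
        monotoneOn_height k (by simp) (by simp) (by linarith)
      have hneg := height_neg_two_pow_odd_le (k := k) (s := 2 * t) (by omega)
      rw [show 2 * (2 * t) + 1 = 4 * t + 1 by ring] at hneg
      push_cast at hneg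
      rw [sub_eq_add_neg j]
      linarith

end Weights

section WeightedShift

variable {𝕜 K : Type*} [NormedAddCommGroup K] {p : ℝ≥0∞}

theorem weightedShift_single {A : ℤ → K → K} (hA : ∀ n, A n 0 = 0)
    {T : lp (fun _ : ℤ => K) p → lp (fun _ : ℤ => K) p}
    (hT : ∀ (x : lp (fun _ : ℤ => K) p) (j : ℤ), T x j = A (j - 1) (x (j - 1))) (j : ℤ) (y : K) :
    T (lp.single p j y) = lp.single p (j + 1) (A j y) := by
  ext i
  rw [hT]
  obtain rfl | hi := eq_or_ne i (j + 1)
  · rw [lp.single_apply_self, add_sub_cancel_right, lp.single_apply_self]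
  · rw [lp.single_apply_ne _ _ _ hi, lp.single_apply_ne _ _ _ (by omega), hA]

variable [RCLike 𝕜] [NormedSpace 𝕜 K] [Fact (1 ≤ p)]

theorem tendsto_two_zpow_smul_single {ι : Type*} {l : Filter ι} {e i : ι → ℤ}
    (he : Tendsto e l atBot) (v : K) :
    Tendsto (fun t => (2 : 𝕜) ^ e t • lp.single (E := fun _ : ℤ => K) p (i t) v) l (𝓝 0) := by
  have hnorm (t : ι) : ‖lp.single (E := fun _ : ℤ => K) p (i t) v‖ ≤ ‖v‖ :=
    (lp.norm_single (E := fun _ : ℤ => K) (zero_lt_one.trans_le Fact.out) (i t) v).le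
  have htwo : 1 < ‖(2 : 𝕜)‖ := by norm_num
  exact tendsto_zpow_smul_nhds_zero htwo he hnorm

theorem exists_zpow_height_smul_single_orbit {f : ℕ → K} {A : ℤ → K →L[𝕜] K}
    (hA : ∀ n k, A n (f k) = (2 : 𝕜) ^ weightExponent k n • f k)
    {T : lp (fun _ : ℤ => K) p →L[𝕜] lp (fun _ : ℤ => K) p}
    (hT : ∀ (x : lp (fun _ : ℤ => K) p) (j : ℤ), T x j = A (j - 1) (x (j - 1))) (j : ℤ) (k : ℕ) :
    ∃ v : K, (2 : 𝕜) ^ height k j • lp.single (E := fun _ : ℤ => K) p j v = lp.single p j (f k) ∧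
      ∀ i, T ((2 : 𝕜) ^ height k i • lp.single p i v) =
        (2 : 𝕜) ^ height k (i + 1) • lp.single p (i + 1) v := by
  refine ⟨((2 : 𝕜) ^ height k j)⁻¹ • f k, ?_, fun i => ?_⟩
  · rw [← lp.single_smul, smul_inv_smul₀ (zpow_ne_zero _ two_ne_zero)]
  · have hAi : A i (((2 : 𝕜) ^ height k j)⁻¹ • f k) =
        (2 : 𝕜) ^ weightExponent k i • ((2 : 𝕜) ^ height k j)⁻¹ • f k := by
      rw [map_smul, hA, smul_comm]
    rw [map_smul, weightedShift_single (fun n => map_zero (A n)) hT, hAi, lp.single_smul,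
      smul_smul, ← zpow_add₀ two_ne_zero, ← height_add_one]

theorem dense_isDSupercyclicVector_weightedShift [CompleteSpace K] (hp : p ≠ ∞)
    {f : ℕ → K} (hf : Dense (Submodule.span 𝕜 (Set.range f) : Set K)) {A : ℤ → K →L[𝕜] K}
    (hA : ∀ n k, A n (f k) = (2 : 𝕜) ^ weightExponent k n • f k)
    {T : lp (fun _ : ℤ => K) p →L[𝕜] lp (fun _ : ℤ => K) p}
    (hT : ∀ (x : lp (fun _ : ℤ => K) p) (j : ℤ), T x j = A (j - 1) (x (j - 1))) :
    Dense {x | IsDSupercyclicVector T (T ^ 2) x} := by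
  have hGdense := dense_span_iUnion_single (α := ℤ) (E := fun _ => K) hp fun _ => hf
  have hGcount : (⋃ j : ℤ, lp.single (E := fun _ => K) p j '' Set.range f).Countable :=
    Set.countable_iUnion fun j => (Set.countable_range f).image _
  have := separableSpace_of_dense_span_s11 hGcount hGdense
  have := UniformSpace.secondCountable_of_separable (lp (fun _ : ℤ => K) p)
  have hscale : Tendsto (fun t : ℕ => (2 : 𝕜) ^ (-t : ℤ)) atTop (𝓝 0) := by
    simpa using tendsto_zpow_smul_nhds_zero (a := (2 : 𝕜)) (by norm_num)
      (tendsto_neg_atTop_atBot.comp tendsto_natCast_atTop_atTop)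
      fun _ : ℕ => (norm_one (α := 𝕜)).le
  refine dense_isDSupercyclicVector_sq_of_orbits (l := atTop) hGdense
    (fun t : ℕ => 2 ^ (4 * t + 1)) (fun t => zpow_ne_zero _ two_ne_zero) hscale fun x hx => ?_
  obtain ⟨j, _, ⟨k, rfl⟩, rfl⟩ := Set.mem_iUnion.1 hx
  obtain ⟨v, hv₀, hv⟩ := exists_zpow_height_smul_single_orbit hA hT j k
  refine ⟨fun m => (2 : 𝕜) ^ height k (j + m) • lp.single p (j + m) v, by simpa using hv₀,
    fun m => by simpa only [add_assoc] using hv (j + m), ?_⟩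
  simp only [smul_smul, ← zpow_add₀ (two_ne_zero (α := 𝕜)), ← zpow_neg, neg_neg, Nat.cast_pow,
    Nat.cast_ofNat, ← sub_eq_add_neg, add_comm (-_ : ℤ), add_comm (_ : ℤ) (height _ _)]
  exact ⟨tendsto_two_zpow_smul_single (tendsto_height_add_two_pow k j) v,
    tendsto_two_zpow_smul_single (tendsto_height_add_two_mul_two_pow k j) v,
    tendsto_two_zpow_smul_single (tendsto_height_sub_two_pow k j) v,
    tendsto_two_zpow_smul_single (tendsto_height_sub_two_mul_two_pow k j) v⟩

end WeightedShift

theorem stmt11_general {𝕜 K : Type*} [RCLike 𝕜] [NormedAddCommGroup K] [NormedSpace 𝕜 K]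
    [CompleteSpace K] {p : ℝ≥0∞} [Fact (1 ≤ p)] (hp : p ≠ ∞)
    (f : ℕ → K) (hfdense : Dense (Submodule.span 𝕜 (Set.range f) : Set K))
    (A : ℤ → K →L[𝕜] K)
    (hAC : ∀ n ∈ Cset, ∀ k : ℕ, A n (f k) = if (k : ℤ) ≤ n then (2 : 𝕜)⁻¹ • f k else f k)
    (hAD : ∀ n ∈ Dset, ∀ k : ℕ, A n (f k) = if (k : ℤ) ≤ n then (2 : 𝕜) • f k else f k)
    (hAE : ∀ n ∈ Eset, ∀ k : ℕ, A n (f k) = if (k : ℤ) ≤ -n then (2 : 𝕜) • f k else f k)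
    (hAelse : ∀ n : ℤ, n ∉ Cset ∪ Dset ∪ Eset → ∀ k : ℕ, A n (f k) = f k)
    (T : lp (fun _ : ℤ => K) p →L[𝕜] lp (fun _ : ℤ => K) p)
    (hT : ∀ (x : lp (fun _ : ℤ => K) p) (j : ℤ), T x j = A (j - 1) (x (j - 1))) :
    Dense {x | IsDSupercyclicVector T (T ^ 2) x} :=
  dense_isDSupercyclicVector_weightedShift hp hfdense
    (weight_apply_eq_zpow_smul hAC hAD hAE hAelse) hT

theorem stmt11
    {K : Type*} [NormedAddCommGroup K] [InnerProductSpace ℂ K] [CompleteSpace K]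
    (f : ℕ → K) (hf : Orthonormal ℂ f)
    (hfdense : Dense (Submodule.span ℂ (Set.range f) : Set K))
    (A : ℤ → K →L[ℂ] K)
    (hAC : ∀ n ∈ Cset, ∀ k : ℕ, A n (f k) = if (k : ℤ) ≤ n then (2 : ℂ)⁻¹ • f k else f k)
    (hAD : ∀ n ∈ Dset, ∀ k : ℕ, A n (f k) = if (k : ℤ) ≤ n then (2 : ℂ) • f k else f k)
    (hAE : ∀ n ∈ Eset, ∀ k : ℕ, A n (f k) = if (k : ℤ) ≤ -n then (2 : ℂ) • f k else f k)
    (hAelse : ∀ n : ℤ, n ∉ Cset ∪ Dset ∪ Eset → ∀ k : ℕ, A n (f k) = f k)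
    (T : lp (fun _ : ℤ => K) 2 →L[ℂ] lp (fun _ : ℤ => K) 2)
    (hT : ∀ (x : lp (fun _ : ℤ => K) 2) (j : ℤ),
      (T x : ∀ _ : ℤ, K) j = A (j - 1) ((x : ∀ _ : ℤ, K) (j - 1))) :
    Dense {x : lp (fun _ : ℤ => K) 2 | Dense (Set.range fun p : ℂ × ℕ =>
      (p.1 • ((T ^ p.2) x), p.1 • ((T ^ (2 * p.2)) x)))} := by
  simpa only [IsDSupercyclicVector, ← pow_mul] using
    stmt11_general ENNReal.ofNat_ne_top f hfdense A hAC hAD hAE hAelse T hT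
end
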